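/- Let α < 0 and r > 0, and let D ⊆ {ζ ∈ ℂ : Re ζ < β} for some β < α, with D having an accumulation point in the half-plane {Re ζ < β}. Then for every τ ∈ V_{α,r} with τ(0) = τ'(0) = 0, with associated extension F of its Laplace transform, and every ε > 0, there exist n ∈ ℕ, ζ_1, …, ζ_n ∈ D, and c_1, …, c_n ∈ ℂ such that sup_{x≥0} | τ'(x) − Σ_{j=1}^n c_j ζ_j e^{ζ_j x} | + sup_{s∈R̄_{α,r}} | F(s) − Σ_{j=1}^n c_j/(s−ζ_j) | < ε. That is, V⁰_{α,r} is contained in the closure of span{e_ζ : ζ ∈ D} in V_{α,r}. -/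

import Mathlib

open Filter Set MeasureTheory

/-- The Laplace transform `L{f;s} = ∫_0^∞ f(x) e^{-sx} dx`. -/
noncomputable def Laplace (f : ℝ → ℂ) (s : ℂ) : ℂ :=
  ∫ x in Set.Ioi (0 : ℝ), f x * Complex.exp (-(s * (x : ℂ)))

/-- The closed rectangle `R̄_{α,r} = {s : α ≤ Re s ≤ 1, |Im s| ≤ r}`. -/
def Rbar (α r : ℝ) : Set ℂ := {s : ℂ | α ≤ s.re ∧ s.re ≤ 1 ∧ |s.im| ≤ r}

/-- The open rectangle `R_{α,r} = {s : α < Re s < 1, |Im s| < r}`. -/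
def Ropen (α r : ℝ) : Set ℂ := {s : ℂ | α < s.re ∧ s.re < 1 ∧ |s.im| < r}


open scoped NNReal Topology BoundedContinuousFunction FourierTransform Convolution

lemma Rbar_eq (α r : ℝ) : Rbar α r = Icc α 1 ×ℂ Icc (-r) r := by
  ext s
  simp only [Rbar, mem_ofPred_eq, Complex.mem_reProdIm, mem_Icc, abs_le]
  tauto

lemma Ropen_eq (α r : ℝ) : Ropen α r = Ioo α 1 ×ℂ Ioo (-r) r := by
  ext s
  simp only [Ropen, mem_ofPred_eq, Complex.mem_reProdIm, mem_Ioo, abs_lt]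
  tauto

lemma isCompact_Rbar (α r : ℝ) : IsCompact (Rbar α r) := by
  rw [Rbar_eq]
  exact isCompact_Icc.reProdIm isCompact_Icc

instance compactSpace_Rbar (α r : ℝ) : CompactSpace (Rbar α r) :=
  isCompact_iff_compactSpace.mp (isCompact_Rbar α r)

/-- The ambient Banach space. -/
abbrev XX (α r : ℝ) : Type := (ℝ≥0 →ᵇ ℂ) × C(Rbar α r, ℂ)

lemma norm_exp_mul_le {ζ : ℂ} (h : ζ.re ≤ 0) (x : ℝ≥0) :
    ‖Complex.exp (ζ * ((x : ℝ) : ℂ))‖ ≤ 1 := by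
  rw [Complex.norm_exp]
  simp only [Complex.mul_re, Complex.ofReal_re, Complex.ofReal_im, mul_zero, sub_zero]
  exact Real.exp_le_one_iff.mpr (mul_nonpos_of_nonpos_of_nonneg h x.2)

/-- `x ↦ e^{ζ x}` as a bounded continuous function. -/
noncomputable def E0 (ζ : ℂ) : ℝ≥0 →ᵇ ℂ :=
  if h : ζ.re ≤ 0 then
    BoundedContinuousFunction.ofNormedAddCommGroup
      (fun x : ℝ≥0 => Complex.exp (ζ * ((x : ℝ) : ℂ))) (by fun_prop) 1 (norm_exp_mul_le h)
  else 0

lemma E0_apply {ζ : ℂ} (h : ζ.re ≤ 0) (x : ℝ≥0) :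
    E0 ζ x = Complex.exp (ζ * ((x : ℝ) : ℂ)) := by
  simp [E0, h]

lemma norm_E0_le (ζ : ℂ) : ‖E0 ζ‖ ≤ 1 := by
  by_cases h : ζ.re ≤ 0
  · refine (BoundedContinuousFunction.norm_le zero_le_one).2 fun x => ?_
    rw [E0_apply h]
    exact norm_exp_mul_le h x
  · simp [E0, h]

lemma xexp_bound {a : ℝ} (ha : 0 < a) (x : ℝ) (hx : 0 ≤ x) : x * Real.exp (-(a * x)) ≤ 1 / a := by
  have h1 := Real.add_one_le_exp (a * x)
  rw [Real.exp_neg, ← div_eq_mul_inv, div_le_div_iff₀ (Real.exp_pos _) ha]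
  nlinarith

lemma x2exp_bound {a : ℝ} (ha : 0 < a) (x : ℝ) (hx : 0 ≤ x) :
    x ^ 2 * Real.exp (-(a * x)) ≤ 2 / a ^ 2 := by
  have h1 := Real.quadratic_le_exp_of_nonneg (x := a * x) (by positivity)
  rw [Real.exp_neg, ← div_eq_mul_inv, div_le_div_iff₀ (Real.exp_pos _) (by positivity)]
  have : 0 ≤ a * x := by positivity
  nlinarith

/-- derivative of `E0`. -/
noncomputable def E1 (ζ : ℂ) (h : ζ.re < 0) : ℝ≥0 →ᵇ ℂ :=
    BoundedContinuousFunction.ofNormedAddCommGroup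
      (fun x : ℝ≥0 => ((x : ℝ) : ℂ) * Complex.exp (ζ * ((x : ℝ) : ℂ))) (by fun_prop) (1 / (-ζ.re))
      (by
        intro x
        have := xexp_bound (a := -ζ.re) (by linarith) x x.2
        rw [norm_mul, Complex.norm_exp]
        simpa using this)

lemma hasDerivAt_E0 (ζ : ℂ) (h : ζ.re < 0) : HasDerivAt E0 (E1 ζ h) ζ := by
  have ha : 0 < -ζ.re / 2 := by linarith
  set a := -ζ.re / 2 with hadef
  rw [hasDerivAt_iff_isLittleO]
  have key : ∀ᶠ w in 𝓝 ζ, ‖E0 w - E0 ζ - (w - ζ) • E1 ζ h‖ ≤ 2 / a ^ 2 * ‖(‖w - ζ‖ ^ 2 : ℝ)‖ := by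
    filter_upwards [Metric.ball_mem_nhds ζ ha] with w hw
    rw [Metric.mem_ball, dist_eq_norm] at hw
    have hwre : w.re ≤ 0 := by
      have := (abs_le.1 (Complex.abs_re_le_norm (w - ζ))).2
      simp at this
      linarith
    refine (BoundedContinuousFunction.norm_le (by positivity)).2 fun x => ?_
    have e1 : (E0 w - E0 ζ - (w - ζ) • E1 ζ h) x =
        Complex.exp (ζ * ((x : ℝ) : ℂ)) * (Complex.exp ((w - ζ) * ((x : ℝ) : ℂ)) -
          ∑ m ∈ Finset.range 2, ((w - ζ) * ((x : ℝ) : ℂ)) ^ m / (m.factorial : ℂ)) := by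
      simp only [BoundedContinuousFunction.coe_sub, BoundedContinuousFunction.coe_smul, Pi.sub_apply,
        E0_apply hwre, E0_apply h.le]
      have : Complex.exp (w * ((x : ℝ) : ℂ)) =
          Complex.exp (ζ * ((x : ℝ) : ℂ)) * Complex.exp ((w - ζ) * ((x : ℝ) : ℂ)) := by
        rw [← Complex.exp_add]; ring_nf
      rw [this]
      simp [Finset.sum_range_succ, E1]
      ring
    rw [e1, norm_mul]
    have h2 := Complex.norm_exp_sub_sum_le_norm_mul_exp ((w - ζ) * ((x : ℝ) : ℂ)) 2
    have hx : (0 : ℝ) ≤ x := x.2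
    have h3 : ‖(w - ζ) * ((x : ℝ) : ℂ)‖ = ‖w - ζ‖ * x := by
      rw [norm_mul]; simp
    rw [h3] at h2
    have h4 : ‖Complex.exp (ζ * ((x : ℝ) : ℂ))‖ = Real.exp (ζ.re * x) := by
      rw [Complex.norm_exp]; simp
    rw [h4]
    have h5 : Real.exp (‖w - ζ‖ * x) ≤ Real.exp (a * x) := by
      apply Real.exp_le_exp.2; gcongr
    have h6 := x2exp_bound ha x hx
    calc _ ≤ Real.exp (ζ.re * x) * ((‖w - ζ‖ * x) ^ 2 * Real.exp (a * x)) := by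
            gcongr
            exact h2.trans (by gcongr)
      _ = ‖w - ζ‖ ^ 2 * (x ^ 2 * (Real.exp (ζ.re * x) * Real.exp (a * x))) := by ring
      _ = ‖w - ζ‖ ^ 2 * (x ^ 2 * Real.exp (-(a * x))) := by
            rw [← Real.exp_add]
            congr 3
            rw [hadef]; ring_nf
      _ ≤ ‖w - ζ‖ ^ 2 * (2 / a ^ 2) := by gcongr
      _ = _ := by rw [Real.norm_of_nonneg (by positivity)]; ring
  have h1 : (fun w => E0 w - E0 ζ - (w - ζ) • E1 ζ h) =O[𝓝 ζ] fun w => (‖w - ζ‖ ^ 2 : ℝ) :=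
    Asymptotics.IsBigO.of_bound _ key
  refine h1.trans_isLittleO ?_
  have := (Asymptotics.isLittleO_pow_id (𝕜 := ℝ) (one_lt_two)).comp_tendsto
    (k := fun w : ℂ => ‖w - ζ‖) (l' := 𝓝 ζ) (by
      have : Continuous fun w : ℂ => ‖w - ζ‖ := by fun_prop
      simpa using this.tendsto ζ)
  exact this.norm_right.congr_right (by simp) |>.of_norm_right

/-- the inclusion of the rectangle -/
noncomputable def idC (α r : ℝ) : C(Rbar α r, ℂ) := ⟨fun s => (s : ℂ), continuous_subtype_val⟩

/-- `(ζ e_ζ, 1/(s-ζ))` -/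
noncomputable def Phi (α r : ℝ) (ζ : ℂ) : XX α r := (ζ • E0 ζ, - resolvent (idC α r) ζ)

/-- The region of admissible exponents. -/
def Om (α r : ℝ) : Set ℂ := {ζ | ζ.re < 0 ∧ (ζ.re < α ∨ r < ζ.im ∨ ζ.im < -r)}

lemma Om_not_mem {α r : ℝ} {ζ : ℂ} (h : ζ ∈ Om α r) : ζ ∉ Rbar α r := by
  rintro ⟨h1, h2, h3⟩
  rw [abs_le] at h3
  rcases h.2 with h | h | h <;> linarith [h3.1, h3.2]

lemma resolventSet_idC {α r : ℝ} {ζ : ℂ} (h : ζ ∉ Rbar α r) : ζ ∈ resolventSet ℂ (idC α r) := by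
  rw [spectrum.mem_resolventSet_iff, ContinuousMap.isUnit_iff_forall_ne_zero]
  intro x hx
  apply h
  have : ζ = x := by
    simpa [idC, sub_eq_zero, Algebra.algebraMap_eq_smul_one] using hx
  rw [this]; exact x.2

lemma Phi_snd_apply {α r : ℝ} {ζ : ℂ} (h : ζ ∉ Rbar α r) (s : Rbar α r) :
    (Phi α r ζ).2 s = 1 / ((s : ℂ) - ζ) := by
  have h1 := spectrum.mem_resolventSet_iff.1 (resolventSet_idC h)
  have h2 : resolvent (idC α r) ζ * (algebraMap ℂ _ ζ - idC α r) = 1 :=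
    Ring.inverse_mul_cancel _ h1
  have h3 := congrArg (fun f : C(Rbar α r, ℂ) => f s) h2
  have h4 : resolvent (idC α r) ζ s * (ζ - s) = 1 := by
    simpa [idC, Algebra.algebraMap_eq_smul_one] using h3
  have h5 : ζ - s ≠ 0 := right_ne_zero_of_mul_eq_one h4
  have h6 : (s : ℂ) - ζ ≠ 0 := by rwa [← neg_sub, neg_ne_zero]
  simp only [Phi, ContinuousMap.neg_apply]
  rw [eq_div_iff h6, ← h4]
  ring

lemma Phi_fst_apply {α r : ℝ} {ζ : ℂ} (h : ζ.re ≤ 0) (x : ℝ≥0) :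
    (Phi α r ζ).1 x = ζ * Complex.exp (ζ * ((x : ℝ) : ℂ)) := by
  simp [Phi, E0_apply h]

lemma differentiableAt_Phi {α r : ℝ} {ζ : ℂ} (h : ζ ∈ Om α r) : DifferentiableAt ℂ (Phi α r) ζ := by
  refine DifferentiableAt.prodMk ?_ ?_
  · exact differentiableAt_id.smul (hasDerivAt_E0 ζ h.1).differentiableAt
  · exact (spectrum.hasDerivAt_resolvent_const_left
      (resolventSet_idC (Om_not_mem h))).differentiableAt.neg

lemma isOpen_Om (α r : ℝ) : IsOpen (Om α r) := by
  unfold Om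
  refine IsOpen.inter (isOpen_lt Complex.continuous_re continuous_const) (IsOpen.union
    (isOpen_lt Complex.continuous_re continuous_const) (IsOpen.union
    (isOpen_lt continuous_const Complex.continuous_im)
      (isOpen_lt Complex.continuous_im continuous_const)))

lemma isPreconnected_Om {α r : ℝ} (hα : α < 0) : IsPreconnected (Om α r) := by
  have e : Om α r = ({ζ : ℂ | ζ.re < α} ∪ ({ζ : ℂ | ζ.re < 0} ∩ {ζ : ℂ | r < ζ.im})) ∪
      ({ζ : ℂ | ζ.re < 0} ∩ {ζ : ℂ | ζ.im < -r}) := by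
    ext ζ
    simp only [Om, mem_ofPred_eq, mem_union, mem_inter_iff]
    constructor
    · tauto
    · rintro ((h | h) | h)
      · exact ⟨by linarith, Or.inl h⟩
      · tauto
      · tauto
  rw [e]
  refine IsPreconnected.union ⟨α - 1, -r - 1⟩ (Or.inl (by simp)) (by simp; linarith)
    (IsPreconnected.union ⟨α - 1, r + 1⟩ (by simp) (by simp; linarith) ?_ ?_) ?_
  · exact (convex_halfSpace_re_lt α).isPreconnected
  · exact ((convex_halfSpace_re_lt 0).inter (convex_halfSpace_im_gt r)).isPreconnected
  · exact ((convex_halfSpace_re_lt 0).inter (convex_halfSpace_im_lt (-r))).isPreconnected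

/-- closed span -/
noncomputable def MM (α r : ℝ) (D : Set ℂ) : Submodule ℂ (XX α r) :=
  (Submodule.span ℂ (Phi α r '' D)).topologicalClosure

lemma isClosed_MM (α r : ℝ) (D : Set ℂ) : IsClosed (MM α r D : Set (XX α r)) :=
  Submodule.isClosed_topologicalClosure _

lemma Phi_mem_MM {α r β : ℝ} (hα : α < 0) (hβ : β < α) {D : Set ℂ}
    (hacc : ∃ z : ℂ, z.re < β ∧ AccPt z (Filter.principal D)) {ζ : ℂ} (hζ : ζ ∈ Om α r) :
    Phi α r ζ ∈ MM α r D := by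
  obtain ⟨z, hz, hz2⟩ := hacc
  haveI : IsClosed (MM α r D : Set (XX α r)) := isClosed_MM α r D
  have hd : DifferentiableOn ℂ (fun w => (MM α r D).mkQL (Phi α r w)) (Om α r) := fun w hw =>
    (((MM α r D).mkQL.differentiableAt).comp w (differentiableAt_Phi hw)).differentiableWithinAt
  have ha := hd.analyticOnNhd (isOpen_Om α r)
  have := ha.eqOn_zero_of_preconnected_of_frequently_eq_zero (isPreconnected_Om hα) (z₀ := z)
    ⟨by linarith, Or.inl (by linarith)⟩ (by
      rw [accPt_iff_frequently] at hz2
      rw [frequently_nhdsWithin_iff]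
      refine hz2.mono ?_
      rintro w ⟨h1, h2⟩
      refine ⟨?_, h1⟩
      simp only [Submodule.mkQL_apply, Submodule.mkQ_apply, Submodule.Quotient.mk_eq_zero]
      exact Submodule.le_topologicalClosure _ (Submodule.subset_span ⟨w, h2, rfl⟩)) hζ
  simpa using this

lemma integral_mem_MM {α r : ℝ} {D : Set ℂ} {μ : Measure ℝ} {φ : ℝ → XX α r}
    (h : ∀ᵐ y ∂μ, φ y ∈ MM α r D) (hi : Integrable φ μ) : ∫ y, φ y ∂μ ∈ MM α r D := by
  haveI : IsClosed (MM α r D : Set (XX α r)) := isClosed_MM α r D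
  have h1 := (MM α r D).mkQL.integral_comp_comm hi
  have h2 : ∫ y, (MM α r D).mkQL (φ y) ∂μ = 0 := by
    rw [integral_eq_zero_of_ae]
    filter_upwards [h] with y hy
    simpa using hy
  rw [h2] at h1
  simpa using h1.symm


lemma Ropen_subset_Rbar (α r : ℝ) : Ropen α r ⊆ Rbar α r :=
  fun _ h => ⟨h.1.le, h.2.1.le, h.2.2.le⟩

lemma isOpen_Ropen (α r : ℝ) : IsOpen (Ropen α r) := by
  rw [Ropen_eq]; exact isOpen_Ioo.reProdIm isOpen_Ioo

lemma Rbar_subset_closure {α r : ℝ} (hα : α < 0) (hr : 0 < r) :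
    Rbar α r ⊆ closure (Ropen α r) := by
  rw [Ropen_eq, Complex.closure_reProdIm, closure_Ioo (by linarith), closure_Ioo (by linarith),
    Rbar_eq]

lemma isPreconnected_Ropen (α r : ℝ) : IsPreconnected (Ropen α r) := by
  rw [Ropen_eq]
  have : Ioo α 1 ×ℂ Ioo (-r) r = {z : ℂ | α < z.re} ∩ {z : ℂ | z.re < 1} ∩
      ({z : ℂ | -r < z.im} ∩ {z : ℂ | z.im < r}) := by
    ext z; simp [Complex.mem_reProdIm]
  rw [this]
  exact (((convex_halfSpace_re_gt _).inter (convex_halfSpace_re_lt _)).inter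
    ((convex_halfSpace_im_gt _).inter (convex_halfSpace_im_lt _))).isPreconnected

lemma integrableOn_bcf_exp (g : ℝ≥0 →ᵇ ℂ) {s : ℂ} (hs : 0 < s.re) :
    IntegrableOn (fun x : ℝ => g x.toNNReal * Complex.exp (-(s * (x : ℂ)))) (Ioi 0) := by
  have h1 : IntegrableOn (fun x : ℝ => Complex.exp (-s * (x : ℂ))) (Ioi 0) :=
    integrableOn_exp_mul_complex_Ioi (by simpa using hs) 0
  have h2 := h1.bdd_mul (f := fun x : ℝ => g x.toNNReal) (c := ‖g‖)
    (Continuous.aestronglyMeasurable (by fun_prop))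
    (Eventually.of_forall fun x => g.norm_coe_le_norm _)
  rw [IntegrableOn]
  simpa using h2

/-- The Laplace transform at `s` as a functional. -/
noncomputable def lapF (s : ℂ) (hs : 0 < s.re) : (ℝ≥0 →ᵇ ℂ) →L[ℂ] ℂ :=
  LinearMap.mkContinuous
    { toFun := fun g => ∫ x in Ioi (0 : ℝ), g x.toNNReal * Complex.exp (-(s * (x : ℂ)))
      map_add' := fun f g => by
        rw [← integral_add (integrableOn_bcf_exp f hs) (integrableOn_bcf_exp g hs)]
        simp [add_mul]
      map_smul' := fun c g => by
        simp [← integral_const_mul, mul_assoc] }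
    (∫ x in Ioi (0 : ℝ), ‖Complex.exp (-(s * (x : ℂ)))‖) (by
      intro g
      simp only [LinearMap.coe_mk, AddHom.coe_mk]
      rw [mul_comm, ← integral_const_mul]
      have h1 : IntegrableOn (fun x : ℝ => Complex.exp (-s * (x : ℂ))) (Ioi 0) :=
        integrableOn_exp_mul_complex_Ioi (by simpa using hs) 0
      refine norm_integral_le_of_norm_le ?_ (Eventually.of_forall fun x => ?_)
      · have := h1.norm.const_mul ‖g‖
        simpa using this
      · rw [norm_mul]
        gcongr
        exact g.norm_coe_le_norm _)

lemma lapF_apply (s : ℂ) (hs : 0 < s.re) (g : ℝ≥0 →ᵇ ℂ) :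
    lapF s hs g = ∫ x in Ioi (0 : ℝ), g x.toNNReal * Complex.exp (-(s * (x : ℂ))) := rfl

/-- `L{g}(s) - s G(s)` as a functional -/
noncomputable def ell {α r : ℝ} (s : Rbar α r) (hs : 0 < (s : ℂ).re) : XX α r →L[ℂ] ℂ :=
  (lapF s hs).comp (ContinuousLinearMap.fst ℂ _ _) -
    (s : ℂ) • (ContinuousMap.evalCLM ℂ s).comp (ContinuousLinearMap.snd ℂ _ _)

lemma ell_Phi {α r : ℝ} (s : Rbar α r) (hs : 0 < (s : ℂ).re) {ζ : ℂ} (hζ : ζ ∈ Om α r) :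
    ell s hs (Phi α r ζ) = -1 := by
  have h1 : ell s hs (Phi α r ζ) = lapF s hs (Phi α r ζ).1 - (s : ℂ) * (Phi α r ζ).2 s := by
    simp [ell]
  have hne : (s : ℂ) - ζ ≠ 0 := by
    intro h
    have := congrArg Complex.re h
    simp at this
    linarith [hζ.1]
  rw [h1, Phi_snd_apply (Om_not_mem hζ), lapF_apply]
  have h2 : ∫ x in Ioi (0 : ℝ), (Phi α r ζ).1 x.toNNReal * Complex.exp (-((s : ℂ) * (x : ℂ))) =
      ∫ x in Ioi (0 : ℝ), ζ * Complex.exp ((ζ - s) * (x : ℂ)) := by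
    refine setIntegral_congr_fun measurableSet_Ioi fun x hx => ?_
    show (Phi α r ζ).1 x.toNNReal * Complex.exp (-((s : ℂ) * (x : ℂ))) = _
    rw [Phi_fst_apply hζ.1.le, Real.coe_toNNReal _ (le_of_lt hx), mul_assoc, ← Complex.exp_add]
    ring_nf
  rw [h2, integral_const_mul, integral_exp_mul_complex_Ioi (by simp; linarith [hζ.1])]
  have : ζ - (s : ℂ) ≠ 0 := by rwa [← neg_sub, neg_ne_zero]
  simp
  field_simp
  ring

lemma MM_induction {α r : ℝ} {D : Set ℂ} {N : Submodule ℂ (XX α r)}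
    (hN : IsClosed (N : Set (XX α r))) (h : ∀ ζ ∈ D, Phi α r ζ ∈ N) : MM α r D ≤ N := by
  apply Submodule.topologicalClosure_minimal _ _ hN
  rw [Submodule.span_le]
  rintro _ ⟨ζ, hζ, rfl⟩
  exact h ζ hζ

open Classical in
/-- extension by zero -/
noncomputable def extC {α r : ℝ} (f : C(Rbar α r, ℂ)) (s : ℂ) : ℂ :=
  if h : s ∈ Rbar α r then f ⟨s, h⟩ else 0

lemma extC_apply {α r : ℝ} (f : C(Rbar α r, ℂ)) (s : Rbar α r) : extC f s = f s := by
  simp [extC]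

/-- pairs with analytic second component -/
noncomputable def Nan (α r : ℝ) : Submodule ℂ (XX α r) where
  carrier := {p | DifferentiableOn ℂ (extC p.2) (Ropen α r)}
  add_mem' := by
    intro a b ha hb
    refine (DifferentiableOn.add ha hb).congr fun s hs => ?_
    simp [extC, Ropen_subset_Rbar _ _ hs]
  zero_mem' := by
    refine (differentiableOn_const (0 : ℂ)).congr fun s hs => ?_
    simp [extC]
  smul_mem' := by
    intro c a ha
    refine (DifferentiableOn.const_smul ha c).congr fun s hs => ?_
    simp [extC, Ropen_subset_Rbar _ _ hs]

lemma isClosed_Nan (α r : ℝ) : IsClosed (Nan α r : Set (XX α r)) := by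
  rw [← isSeqClosed_iff_isClosed]
  intro u p hu hp
  have : TendstoUniformlyOn (fun n => extC (u n).2) (extC p.2) atTop (Ropen α r) := by
    rw [Metric.tendstoUniformlyOn_iff]
    intro ε hε
    filter_upwards [Metric.tendsto_nhds.1 hp ε hε] with n hn s hs
    have h1 : dist (u n).2 p.2 < ε := lt_of_le_of_lt (le_max_right _ _) hn
    have h2 := ContinuousMap.dist_apply_le_dist (f := (u n).2) (g := p.2)
      ⟨s, Ropen_subset_Rbar _ _ hs⟩
    rw [dist_comm]
    simp only [extC, Ropen_subset_Rbar _ _ hs, dite_true]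
    linarith
  exact this.tendstoLocallyUniformlyOn.differentiableOn (Eventually.of_forall hu)
    (isOpen_Ropen α r)

lemma MM_snd_eq {α r β : ℝ} (hα : α < 0) (hr : 0 < r) (hβ : β < α) {D : Set ℂ}
    (hD : D ⊆ {ζ : ℂ | ζ.re < β}) {p : XX α r} (hp : p ∈ MM α r D) {h : ℝ → ℂ}
    (hh : ∀ x : ℝ≥0, p.1 x = h x) {H : ℂ → ℂ} (hH : DifferentiableOn ℂ H (Ropen α r))
    (hHc : ContinuousOn H (Rbar α r))
    (hL : ∀ s ∈ Rbar α r, 0 < s.re → Laplace h s = s * H s) (s : Rbar α r) : p.2 s = H s := by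
  have hDOm : ∀ ζ ∈ D, ζ ∈ Om α r := fun ζ hζ => by
    have : ζ.re < β := hD hζ
    exact ⟨by linarith, Or.inl (by linarith)⟩
  have han : p ∈ Nan α r := by
    refine MM_induction (isClosed_Nan α r) (fun ζ hζ => ?_) hp
    have hn := Om_not_mem (hDOm ζ hζ)
    have : DifferentiableOn ℂ (fun s => 1 / (s - ζ)) (Ropen α r) := by
      intro s hs
      have : s - ζ ≠ 0 := by
        rw [sub_ne_zero]; rintro rfl; exact hn (Ropen_subset_Rbar _ _ hs)
      fun_prop (disch := assumption)
    refine this.congr fun s hs => ?_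
    simp only [extC, Ropen_subset_Rbar _ _ hs, dite_true]
    rw [Phi_snd_apply hn]
  have hone : (1 : ℂ) ∈ Rbar α r := ⟨by simp; linarith, by simp, by simp; linarith⟩
  have hell : ∀ (s : Rbar α r) (hs : 0 < (s : ℂ).re),
      ell s hs p = ell ⟨1, hone⟩ (by simp) p := by
    intro s hs
    have hker : p ∈ (ell s hs - ell ⟨1, hone⟩ (by simp)).ker := by
      refine MM_induction (ContinuousLinearMap.isClosed_ker _) (fun ζ hζ => ?_) hp
      rw [LinearMap.mem_ker]
      simp [ell_Phi _ _ (hDOm ζ hζ)]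
    rw [LinearMap.mem_ker] at hker
    simpa [sub_eq_zero] using hker
  set c := ell (α := α) (r := r) ⟨1, hone⟩ (by simp) p with hc
  have hrel : ∀ s ∈ Rbar α r, 0 < s.re → s * (H s - extC p.2 s) = c := by
    intro s hs hs0
    rw [← hell ⟨s, hs⟩ hs0, mul_sub, ← hL s hs hs0]
    simp only [ell, _root_.sub_apply, ContinuousLinearMap.comp_apply,
      _root_.smul_apply, smul_eq_mul, lapF_apply]
    congr 1
    · rw [Laplace]
      refine setIntegral_congr_fun measurableSet_Ioi fun x hx => ?_
      simp [hh, Real.coe_toNNReal _ (le_of_lt hx)]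
    · simp [extC, hs]
  have hdiff : DifferentiableOn ℂ (fun s => s * (H s - extC p.2 s) - c) (Ropen α r) :=
    (differentiableOn_id.mul (hH.sub han)).sub_const c
  have hhalf : ((1 / 2 : ℝ) : ℂ) ∈ Ropen α r :=
    ⟨by simp; linarith, by norm_num, by simp; linarith⟩
  have hzero : EqOn (fun s => s * (H s - extC p.2 s) - c) 0 (Ropen α r) := by
    refine (hdiff.analyticOnNhd (isOpen_Ropen α r)).eqOn_zero_of_preconnected_of_eventuallyEq_zero
      (isPreconnected_Ropen α r) hhalf ?_
    have hopen : IsOpen {z : ℂ | 0 < z.re} := isOpen_lt continuous_const Complex.continuous_re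
    filter_upwards [(isOpen_Ropen α r).mem_nhds hhalf, hopen.mem_nhds (by simp)] with z hz hz0
    simp [hrel z (Ropen_subset_Rbar _ _ hz) hz0]
  have h0 : (0 : ℂ) ∈ Ropen α r := ⟨by simpa using hα, by simp, by simpa using hr⟩
  have hc0 : c = 0 := by
    have := hzero h0
    simpa using this
  -- off zero in the open rectangle
  have heq1 : EqOn (extC p.2) H (Ropen α r \ {0}) := by
    rintro s ⟨hs, hs0⟩
    have := hzero hs
    simp only [hc0, sub_zero, Pi.zero_apply, mul_eq_zero] at this
    rcases this with h | h
    · exact absurd h hs0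
    · exact (sub_eq_zero.1 h).symm
  have hcont : ContinuousOn (extC p.2) (Rbar α r) := by
    rw [continuousOn_iff_continuous_domRestrict]
    convert p.2.continuous using 1
    ext s
    simp [extC_apply]
  have hcl : Rbar α r ⊆ closure (Ropen α r \ {0}) := by
    have h1 : closure (Ropen α r) ⊆ closure (Ropen α r \ {0}) := by
      have : Dense ({0}ᶜ : Set ℂ) := dense_compl_singleton 0
      have := this.open_subset_closure_inter (isOpen_Ropen α r)
      exact closure_minimal (by simpa [sdiff_eq] using this) isClosed_closure
    exact (Rbar_subset_closure hα hr).trans h1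
  have := heq1.of_subset_closure hcont hHc (sdiff_subset.trans (Ropen_subset_Rbar α r)) hcl s.2
  rw [← extC_apply, this]

/-- approximability -/
def Approx (α r : ℝ) (D : Set ℂ) (g : ℝ → ℂ) (F : ℂ → ℂ) : Prop :=
  ∀ ε : ℝ, 0 < ε → ∃ (n : ℕ) (ζs : Fin n → ℂ) (c : Fin n → ℂ),
      (∀ j : Fin n, ζs j ∈ D) ∧
        (∀ x : ℝ, 0 ≤ x →
          ‖g x - ∑ j : Fin n, c j * ζs j * Complex.exp (ζs j * (x : ℂ))‖ ≤ ε) ∧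
        (∀ s ∈ Rbar α r, ‖F s - ∑ j : Fin n, c j / (s - ζs j)‖ ≤ ε)

lemma Approx.of_close {α r : ℝ} {D : Set ℂ} {g : ℝ → ℂ} {F : ℂ → ℂ}
    (h : ∀ ε : ℝ, 0 < ε → ∃ (g₁ : ℝ → ℂ) (F₁ : ℂ → ℂ), Approx α r D g₁ F₁ ∧
      (∀ x : ℝ, 0 ≤ x → ‖g x - g₁ x‖ ≤ ε) ∧ (∀ s ∈ Rbar α r, ‖F s - F₁ s‖ ≤ ε)) :
    Approx α r D g F := by
  intro ε hε
  obtain ⟨g₁, F₁, h1, h2, h3⟩ := h (ε / 2) (by linarith)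
  obtain ⟨n, ζs, c, h4, h5, h6⟩ := h1 (ε / 2) (by linarith)
  refine ⟨n, ζs, c, h4, fun x hx => ?_, fun s hs => ?_⟩
  · refine (norm_sub_le_norm_sub_add_norm_sub _ (g₁ x) _).trans ?_
    linarith [h2 x hx, h5 x hx]
  · refine (norm_sub_le_norm_sub_add_norm_sub _ (F₁ s) _).trans ?_
    linarith [h3 s hs, h6 s hs]

lemma Approx.of_mem {α r β : ℝ} (hα : α < 0) (hβ : β < α) {D : Set ℂ}
    (hD : D ⊆ {ζ : ℂ | ζ.re < β}) {p : XX α r} (hp : p ∈ MM α r D) {h : ℝ → ℂ}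
    (hh : ∀ x : ℝ≥0, p.1 x = h x) {H : ℂ → ℂ} (hH : ∀ s : Rbar α r, p.2 s = H s) :
    Approx α r D h H := by
  have hDOm : ∀ ζ ∈ D, ζ ∈ Om α r := fun ζ hζ => by
    have : ζ.re < β := hD hζ
    exact ⟨by linarith, Or.inl (by linarith)⟩
  intro ε hε
  have hp' : p ∈ closure (Submodule.span ℂ (Phi α r '' D) : Set (XX α r)) := hp
  obtain ⟨q, hq, hpq⟩ := Metric.mem_closure_iff.1 hp' ε hε
  obtain ⟨n, c, v, hv⟩ := Submodule.mem_span_set'.1 hq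
  choose ζs hζD hζ using fun i => (v i).2
  refine ⟨n, ζs, c, hζD, fun x hx => ?_, fun s hs => ?_⟩
  · have h1 : ‖p.1 x.toNNReal - q.1 x.toNNReal‖ ≤ ε := by
      rw [← dist_eq_norm]
      exact (BoundedContinuousFunction.dist_coe_le_dist _).trans
        ((le_max_left _ _).trans hpq.le)
    have h2 : q.1 x.toNNReal = ∑ j : Fin n, c j * ζs j * Complex.exp (ζs j * (x : ℂ)) := by
      rw [← hv, Prod.fst_sum]
      simp only [BoundedContinuousFunction.coe_sum, Finset.sum_apply, Prod.smul_fst,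
        BoundedContinuousFunction.coe_smul, smul_eq_mul]
      refine Finset.sum_congr rfl fun i _ => ?_
      rw [← hζ i, Phi_fst_apply (hDOm _ (hζD i)).1.le, mul_assoc, Real.coe_toNNReal _ hx]
    rw [hh, h2, Real.coe_toNNReal _ hx] at h1
    exact h1
  · have h1 : ‖p.2 ⟨s, hs⟩ - q.2 ⟨s, hs⟩‖ ≤ ε := by
      rw [← dist_eq_norm]
      exact (ContinuousMap.dist_apply_le_dist _).trans
        ((le_max_right _ _).trans hpq.le)
    have h2 : q.2 ⟨s, hs⟩ = ∑ j : Fin n, c j / (s - ζs j) := by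
      rw [← hv, Prod.snd_sum]
      simp only [ContinuousMap.coe_sum, Finset.sum_apply, Prod.smul_snd,
        ContinuousMap.coe_smul, Pi.smul_apply, smul_eq_mul]
      refine Finset.sum_congr rfl fun i _ => ?_
      rw [← hζ i, Phi_snd_apply (Om_not_mem (hDOm _ (hζD i))), mul_one_div]
    rw [hH, h2] at h1
    exact h1


/-- evaluation of the first component -/
noncomputable def evx (α r : ℝ) (x : ℝ≥0) : XX α r →L[ℂ] ℂ :=
  (BoundedContinuousFunction.evalCLM ℂ x).comp (ContinuousLinearMap.fst ℂ _ _)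

lemma evx_apply (α r : ℝ) (x : ℝ≥0) (p : XX α r) : evx α r x p = p.1 x := rfl

/-- open rectangle -/
def WW (a b ρ : ℝ) : Set ℂ := {s | a < s.re ∧ s.re < b ∧ |s.im| < ρ}

lemma side_lemma {α r β : ℝ} (hα : α < 0) (hβ : β < α) {D : Set ℂ}
    (hacc : ∃ z : ℂ, z.re < β ∧ AccPt z (Filter.principal D))
    {W : Set ℂ} {H : ℂ → ℂ} (hH : DifferentiableOn ℂ H W) {γ : ℝ → ℂ} (hγ : Continuous γ)
    {a b : ℝ} (hab : a ≤ b) (hγO : ∀ t ∈ Icc a b, γ t ∈ Om α r) (hγW : ∀ t ∈ Icc a b, γ t ∈ W) :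
    ∃ q ∈ MM α r D, ∀ x : ℝ≥0, q.1 x =
      ∫ t in a..b, H (γ t) * (γ t * Complex.exp (γ t * ((x : ℝ) : ℂ))) := by
  have hc : ContinuousOn (fun t => H (γ t) • Phi α r (γ t)) (Icc a b) := by
    refine ContinuousOn.smul (hH.continuousOn.comp hγ.continuousOn hγW) ?_
    have : ContinuousOn (Phi α r) (Om α r) := fun w hw =>
      (differentiableAt_Phi hw).continuousAt.continuousWithinAt
    exact this.comp hγ.continuousOn hγO
  have hi : IntervalIntegrable (fun t => H (γ t) • Phi α r (γ t)) volume a b := by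
    apply ContinuousOn.intervalIntegrable
    rwa [uIcc_of_le hab]
  refine ⟨∫ t in a..b, H (γ t) • Phi α r (γ t), ?_, fun x => ?_⟩
  · rw [intervalIntegral.integral_of_le hab]
    refine integral_mem_MM ?_ ((intervalIntegrable_iff_integrableOn_Ioc_of_le hab).1 hi)
    refine (ae_restrict_iff' measurableSet_Ioc).2 (Eventually.of_forall fun t ht => ?_)
    exact Submodule.smul_mem _ _ (Phi_mem_MM hα hβ hacc (hγO t (Ioc_subset_Icc_self ht)))
  · rw [← evx_apply, ← ContinuousLinearMap.intervalIntegral_comp_comm _ hi]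
    refine intervalIntegral.integral_congr fun t ht => ?_
    rw [uIcc_of_le hab] at ht
    simp only [map_smul, evx_apply, smul_eq_mul]
    rw [Phi_fst_apply (hγO t ht).1.le]

lemma line_lemma {α r β κ ρ : ℝ} (hα : α < 0) (hβ : β < α) {D : Set ℂ}
    (hacc : ∃ z : ℂ, z.re < β ∧ AccPt z (Filter.principal D))
    (hκ : 0 < κ) (hρ : r < ρ) (hr : 0 < r) {J : ℝ → ℂ} (hJ : Integrable J) :
    ∃ q ∈ MM α r D, ∀ x : ℝ≥0, q.1 x =
      ∫ y in (Ioc (-ρ) ρ)ᶜ, J y * Complex.exp ((-κ + y * Complex.I) * ((x : ℝ) : ℂ)) := by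
  set γ : ℝ → ℂ := fun y => -κ + y * Complex.I with hγ
  have hre : ∀ y, (γ y).re = -κ := fun y => by simp [hγ]
  have him : ∀ y, (γ y).im = y := fun y => by simp [hγ]
  have hne : ∀ y, γ y ≠ 0 := fun y h => by
    have := congrArg Complex.re h
    rw [hre] at this; simp at this; linarith
  have hS : ∀ y ∈ (Icc (-ρ) ρ)ᶜ, γ y ∈ Om α r := fun y hy => by
    refine ⟨by rw [hre]; linarith, Or.inr ?_⟩
    rw [him]
    by_contra hcon
    push Not at hcon
    exact hy ⟨by linarith, by linarith⟩
  have hms : MeasurableSet (Icc (-ρ) ρ)ᶜ := measurableSet_Icc.compl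
  have hγc : Continuous γ := by fun_prop
  have hPc : ContinuousOn (fun y => (γ y)⁻¹ • Phi α r (γ y)) (Icc (-ρ) ρ)ᶜ := by
    refine ContinuousOn.smul (hγc.continuousOn.inv₀ fun y _ => hne y) ?_
    have : ContinuousOn (Phi α r) (Om α r) := fun w hw =>
      (differentiableAt_Phi hw).continuousAt.continuousWithinAt
    exact this.comp hγc.continuousOn hS
  have hbd : ∀ y ∈ (Icc (-ρ) ρ)ᶜ, ‖(γ y)⁻¹ • Phi α r (γ y)‖ ≤ max 1 (1 / κ * (1 / (ρ - r))) := by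
    intro y hy
    rw [Prod.norm_def]
    apply max_le_max
    · simp only [Phi, Prod.smul_fst, smul_smul, inv_mul_cancel₀ (hne y), one_smul]
      exact norm_E0_le _
    · rw [Prod.smul_snd, norm_smul, norm_inv, ← one_div]
      have hρr : 0 < ρ - r := by linarith
      have h1 : κ ≤ ‖γ y‖ := by
        have := Complex.abs_re_le_norm (γ y)
        rw [hre, abs_neg, abs_of_pos hκ] at this
        exact this
      have h2 : ‖(Phi α r (γ y)).2‖ ≤ 1 / (ρ - r) := by
        refine (ContinuousMap.norm_le _ (by positivity)).2 fun s => ?_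
        rw [Phi_snd_apply (Om_not_mem (hS y hy)), norm_div, norm_one]
        refine one_div_le_one_div_of_le hρr ?_
        refine le_trans ?_ (Complex.abs_im_le_norm _)
        have h3 := abs_le.1 s.2.2.2
        rw [Complex.sub_im, him]
        by_cases hyρ : y < -ρ
        · exact le_trans (by linarith [h3.1]) (le_abs_self _)
        · have : ρ < y := by
            by_contra hcon
            exact hy ⟨by linarith, by linarith⟩
          exact le_trans (by linarith [h3.2]) (neg_le_abs _)
      gcongr
  have hae : (Ioc (-ρ) ρ)ᶜ =ᵐ[volume] (Icc (-ρ) ρ)ᶜ := Ioc_ae_eq_Icc.compl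
  have hi : IntegrableOn (fun y => J y • ((γ y)⁻¹ • Phi α r (γ y))) (Icc (-ρ) ρ)ᶜ := by
    refine Integrable.mono' (g := fun y => max 1 (1 / κ * (1 / (ρ - r))) * ‖J y‖)
      (hJ.norm.const_mul _).integrableOn ?_ ?_
    · have : SecondCountableTopologyEither ℝ (XX α r) := secondCountableTopologyEither_of_left ℝ _
      exact hJ.1.restrict.smul (hPc.aestronglyMeasurable hms)
    · refine (ae_restrict_iff' hms).2 (Eventually.of_forall fun y hy => ?_)
      rw [norm_smul, mul_comm]
      gcongr
      exact hbd y hy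
  refine ⟨∫ y in (Icc (-ρ) ρ)ᶜ, J y • ((γ y)⁻¹ • Phi α r (γ y)), ?_, fun x => ?_⟩
  · refine integral_mem_MM ?_ hi
    refine (ae_restrict_iff' hms).2 (Eventually.of_forall fun y hy => ?_)
    exact Submodule.smul_mem _ _ (Submodule.smul_mem _ _ (Phi_mem_MM hα hβ hacc (hS y hy)))
  · rw [← evx_apply, ← ContinuousLinearMap.integral_comp_comm _ hi]
    refine Eq.trans ?_ (setIntegral_congr_set hae).symm
    refine setIntegral_congr_fun hms fun y hy => ?_
    simp only [map_smul, evx_apply, smul_eq_mul]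
    rw [Phi_fst_apply (hS y hy).1.le, inv_mul_cancel_left₀ (hne y)]

lemma inversion_lemma {h : ℝ → ℂ} (hc : Continuous h) (h0 : ∀ x ≤ 0, h x = 0) {κ : ℝ}
    (hi : Integrable fun x : ℝ => Complex.exp (κ * x) * h x)
    (hJ : Integrable fun y : ℝ => Laplace h (-κ + y * Complex.I)) (x : ℝ) :
    h x = (1 / (2 * Real.pi) : ℂ) * ∫ y : ℝ, Laplace h (-κ + y * Complex.I) *
      Complex.exp ((-κ + y * Complex.I) * (x : ℂ)) := by
  set f : ℝ → ℂ := fun x : ℝ => Complex.exp (κ * x) * h x with hf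
  have hfc : Continuous f := by fun_prop
  have hF : ∀ w : ℝ, 𝓕 f w = Laplace h (-κ + ((2 * Real.pi * w : ℝ) : ℂ) * Complex.I) := by
    intro w
    rw [Real.fourier_eq', Laplace, ← integral_indicator measurableSet_Ioi]
    refine integral_congr_ae (Eventually.of_forall fun v => ?_)
    by_cases hv : 0 < v
    · simp only [indicator, mem_Ioi, hv, if_true, hf, smul_eq_mul]
      rw [mul_comm (h v), ← mul_assoc, ← Complex.exp_add]
      congr 2
      simp
      ring
    · simp [indicator, hv, hf, h0 v (not_lt.1 hv)]
  have h2pi : (2 * Real.pi) ≠ 0 := by positivity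
  have hFi : Integrable (𝓕 f) := by
    have := hJ.comp_mul_left' h2pi
    refine this.congr (Eventually.of_forall fun w => ?_)
    simp only [hF]
  have hinv := congrFun (hfc.fourierInv_fourier_eq hi hFi) x
  rw [Real.fourierInv_eq'] at hinv
  have h3 : ∫ v : ℝ, Complex.exp (((2 * Real.pi * inner ℝ v x : ℝ) : ℂ) * Complex.I) • 𝓕 f v =
      ∫ v : ℝ, (fun y : ℝ => Complex.exp (y * x * Complex.I) *
        Laplace h (-κ + y * Complex.I)) (2 * Real.pi * v) := by
    refine integral_congr_ae (Eventually.of_forall fun v => ?_)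
    simp only [hF, smul_eq_mul]
    congr 2
    simp
    ring
  rw [h3, Measure.integral_comp_mul_left (fun y : ℝ => Complex.exp (y * x * Complex.I) *
        Laplace h (-κ + y * Complex.I)) (2 * Real.pi)] at hinv
  have h4 : h x = Complex.exp (-(κ * x)) * f x := by
    simp only [hf]
    rw [← mul_assoc, ← Complex.exp_add]; simp
  rw [h4, ← hinv, Complex.real_smul, mul_left_comm, ← integral_const_mul]
  congr 1
  · rw [abs_of_pos (by positivity)]; push_cast; ring
  · refine integral_congr_ae (Eventually.of_forall fun v => ?_)
    dsimp only
    rw [← mul_assoc, ← Complex.exp_add, mul_comm]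
    congr 2
    ring

lemma core2 {α r β κ a b ρ₀ : ℝ} (hα : α < 0) (hr : 0 < r) (hβ : β < α) {D : Set ℂ}
    (hD : D ⊆ {ζ : ℂ | ζ.re < β})
    (hacc : ∃ z : ℂ, z.re < β ∧ AccPt z (Filter.principal D))
    (hκ : 0 < κ) (hκα : α < -κ) (ha : a < α) (hb : 1 < b) (hρ : r < ρ₀)
    {h : ℝ → ℂ} (hc : Continuous h) (h0 : ∀ x ≤ 0, h x = 0)
    (hi : Integrable fun x : ℝ => Complex.exp (κ * x) * h x)
    (hJ : Integrable fun y : ℝ => Laplace h (-κ + y * Complex.I))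
    {H : ℂ → ℂ} (hH : DifferentiableOn ℂ H (WW a b ρ₀))
    (hL : ∀ s ∈ WW a b ρ₀, -κ ≤ s.re → Laplace h s = s * H s) :
    Approx α r D h H := by
  set a₁ := (a + α) / 2 with ha₁
  set ρ := (r + ρ₀) / 2 with hρdef
  have hρ1 : r < ρ := by rw [hρdef]; linarith
  have hρ2 : ρ < ρ₀ := by rw [hρdef]; linarith
  have haa : a < a₁ := by rw [ha₁]; linarith
  have haα : a₁ < α := by rw [ha₁]; linarith
  obtain ⟨qS, hqS, hqS1⟩ := line_lemma hα hβ hacc hκ hρ1 hr hJ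
  obtain ⟨qL, hqL, hqL1⟩ := side_lemma (r := r) hα hβ hacc hH
    (γ := fun t : ℝ => a₁ + t * Complex.I) (by fun_prop) (a := -ρ) (b := ρ) (by linarith)
    (fun t ht => ⟨by simp; linarith, Or.inl (by simp; linarith)⟩)
    (fun t ht => ⟨by simp; linarith, by simp; linarith, by
      simp; rw [abs_lt]; exact ⟨by linarith [ht.1], by linarith [ht.2]⟩⟩)
  obtain ⟨qB, hqB, hqB1⟩ := side_lemma (r := r) hα hβ hacc hH
    (γ := fun t : ℝ => t + ((-ρ : ℝ) : ℂ) * Complex.I) (by fun_prop) (a := a₁) (b := -κ)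
    (by linarith)
    (fun t ht => ⟨by simp; linarith [ht.2], Or.inr (Or.inr (by simp; linarith))⟩)
    (fun t ht => ⟨by simp; linarith [ht.1], by simp; linarith [ht.2], by
      simp; rw [abs_lt]; exact ⟨by linarith, by linarith⟩⟩)
  obtain ⟨qT, hqT, hqT1⟩ := side_lemma (r := r) hα hβ hacc hH
    (γ := fun t : ℝ => t + ((ρ : ℝ) : ℂ) * Complex.I) (by fun_prop) (a := a₁) (b := -κ)
    (by linarith)
    (fun t ht => ⟨by simp; linarith [ht.2], Or.inr (Or.inl (by simp; linarith))⟩)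
    (fun t ht => ⟨by simp; linarith [ht.1], by simp; linarith [ht.2], by
      simp; rw [abs_lt]; exact ⟨by linarith, by linarith⟩⟩)
  set p : XX α r := (1 / (2 * Real.pi) : ℂ) • (qS + (Complex.I • qB - Complex.I • qT + qL)) with hp
  have hpM : p ∈ MM α r D := by
    refine Submodule.smul_mem _ _ (Submodule.add_mem _ hqS (Submodule.add_mem _
      (Submodule.sub_mem _ (Submodule.smul_mem _ _ hqB) (Submodule.smul_mem _ _ hqT)) hqL))
  have hp1 : ∀ x : ℝ≥0, p.1 x = h x := by
    intro x
    rw [inversion_lemma hc h0 hi hJ x]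
    have hI : Integrable fun y : ℝ => Laplace h (-κ + y * Complex.I) *
        Complex.exp ((-κ + y * Complex.I) * ((x : ℝ) : ℂ)) := by
      refine hJ.mul_bdd (c := 1) (Continuous.aestronglyMeasurable (by fun_prop))
        (Eventually.of_forall fun y => norm_exp_mul_le (by simp; linarith) x)
    rw [← integral_add_compl (measurableSet_Ioc (a := -ρ) (b := ρ)) hI]
    have e1 : p.1 x = (1 / (2 * Real.pi) : ℂ) *
        (qS.1 x + (Complex.I * qB.1 x - Complex.I * qT.1 x + qL.1 x)) := by
      simp [hp]
      ring
    rw [e1, hqS1]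
    congr 1
    rw [add_comm]
    congr 1
    rw [← intervalIntegral.integral_of_le (by linarith)]
    have hrect := Complex.integral_boundary_rect_eq_zero_of_differentiableOn
      (fun z => H z * (z * Complex.exp (z * ((x : ℝ) : ℂ)))) ⟨a₁, -ρ⟩ ⟨-κ, ρ⟩ (by
        have : uIcc a₁ (-κ) ×ℂ uIcc (-ρ) ρ ⊆ WW a b ρ₀ := by
          rw [uIcc_of_le (by linarith), uIcc_of_le (by linarith)]
          rintro z ⟨hz1, hz2⟩
          exact ⟨by linarith [hz1.1], by linarith [hz1.2],
            abs_lt.2 ⟨by linarith [hz2.1], by linarith [hz2.2]⟩⟩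
        exact (hH.mono this).mul (Differentiable.differentiableOn (by fun_prop)))
    simp only [smul_eq_mul] at hrect
    rw [hqB1, hqT1, hqL1]
    have e2 : ∫ y in (-ρ)..ρ, Laplace h (-κ + y * Complex.I) *
        Complex.exp ((-κ + y * Complex.I) * ((x : ℝ) : ℂ)) =
        ∫ y in (-ρ)..ρ, H (((-κ : ℝ) : ℂ) + y * Complex.I) * ((((-κ : ℝ) : ℂ) + y * Complex.I) *
          Complex.exp ((((-κ : ℝ) : ℂ) + y * Complex.I) * ((x : ℝ) : ℂ))) := by
      refine intervalIntegral.integral_congr fun y hy => ?_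
      rw [uIcc_of_le (by linarith)] at hy
      have := hL (-κ + y * Complex.I) ⟨by simp; linarith, by simp; linarith, by
        simp; rw [abs_lt]; exact ⟨by linarith [hy.1], by linarith [hy.2]⟩⟩ (by simp)
      rw [this]
      push_cast
      ring
    rw [e2]
    linear_combination Complex.I * hrect -
      ((∫ y in (-ρ)..ρ, H (((-κ : ℝ) : ℂ) + y * Complex.I) * ((((-κ : ℝ) : ℂ) + y * Complex.I) *
          Complex.exp ((((-κ : ℝ) : ℂ) + y * Complex.I) * ((x : ℝ) : ℂ)))) -
       (∫ y in (-ρ)..ρ, H ((a₁ : ℂ) + y * Complex.I) * (((a₁ : ℂ) + y * Complex.I) *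
          Complex.exp (((a₁ : ℂ) + y * Complex.I) * ((x : ℝ) : ℂ))))) * Complex.I_sq
  have hsub : Rbar α r ⊆ WW a b ρ₀ := fun s hs =>
    ⟨by linarith [hs.1], by linarith [hs.2.1], by linarith [hs.2.2]⟩
  refine Approx.of_mem hα hβ hD hpM hp1 (MM_snd_eq hα hr hβ hD hpM hp1
    (hH.mono ((Ropen_subset_Rbar α r).trans hsub)) (hH.continuousOn.mono hsub) ?_)
  intro s hs hs0
  exact hL s (hsub hs) (by linarith)


lemma Laplace_full {f : ℝ → ℂ} (h0 : ∀ x ≤ 0, f x = 0) (s : ℂ) :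
    Laplace f s = ∫ x : ℝ, f x * Complex.exp (-(s * (x : ℂ))) := by
  rw [Laplace, ← integral_indicator measurableSet_Ioi]
  congr 1
  ext x
  by_cases hx : 0 < x
  · rw [indicator_of_mem (mem_Ioi.2 hx)]
  · rw [indicator_of_notMem (by simpa using hx), h0 x (not_lt.1 hx), zero_mul]

lemma norm_cexp_neg (s : ℂ) (x : ℝ) :
    ‖Complex.exp (-(s * (x : ℂ)))‖ = Real.exp (-(s.re * x)) := by
  rw [Complex.norm_exp]; simp

/-- the smoothing kernel -/
noncomputable def kr (δ : ℝ) (u : ℝ) : ℝ := (max u 0) / δ ^ 2 * Real.exp (-(u / δ))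

lemma kr_cont (δ : ℝ) : Continuous (kr δ) := by
  unfold kr; fun_prop

lemma kr_nonneg (δ u : ℝ) : 0 ≤ kr δ u := by
  unfold kr; positivity

lemma kr_neg (δ : ℝ) {u : ℝ} (hu : u ≤ 0) : kr δ u = 0 := by
  unfold kr; rw [max_eq_right hu]; simp

lemma uexp_lemma {w : ℂ} (hw : 0 < w.re) :
    IntegrableOn (fun u : ℝ => (u : ℂ) * Complex.exp (-(w * u))) (Ioi 0) ∧
    ∫ u in Ioi (0 : ℝ), (u : ℂ) * Complex.exp (-(w * u)) = 1 / w ^ 2 := by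
  have hw0 : w ≠ 0 := by rintro rfl; simp at hw
  have huint : IntegrableOn (fun u : ℝ => (u : ℂ) * Complex.exp (-(w * u))) (Ioi 0) := by
    refine Integrable.mono' (g := fun u : ℝ => (1 / (w.re / 2)) * Real.exp (-(w.re / 2) * u))
      ((exp_neg_integrableOn_Ioi 0 (by positivity : 0 < w.re / 2)).const_mul _)
      (by fun_prop) ?_
    filter_upwards [ae_restrict_mem measurableSet_Ioi] with u hu
    have hu' : 0 ≤ u := le_of_lt hu
    rw [norm_mul, norm_cexp_neg, Complex.norm_real, Real.norm_of_nonneg hu']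
    have := xexp_bound (by positivity : 0 < w.re / 2) u hu'
    have e : Real.exp (-(w.re * u)) = Real.exp (-(w.re / 2 * u)) * Real.exp (-(w.re / 2) * u) := by
      rw [← Real.exp_add]; congr 1; ring
    rw [e, ← mul_assoc]
    gcongr
  refine ⟨huint, ?_⟩
  have hder : ∀ u ∈ Ici (0 : ℝ), HasDerivAt
      (fun u : ℝ => -((u : ℂ) / w + 1 / w ^ 2) * Complex.exp (-(w * u)))
      ((u : ℂ) * Complex.exp (-(w * u))) u := by
    intro u _
    have h1 : HasDerivAt (fun u : ℝ => (u : ℂ)) 1 u := Complex.ofRealCLM.hasDerivAt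
    have h2 : HasDerivAt (fun u : ℝ => -((u : ℂ) / w + 1 / w ^ 2)) (-(1 / w)) u :=
      ((h1.div_const w).add_const _).neg
    have h3 : HasDerivAt (fun u : ℝ => Complex.exp (-(w * u)))
        (Complex.exp (-(w * u)) * (-(w * 1))) u := ((h1.const_mul w).neg).cexp
    refine (h2.mul h3).congr_deriv ?_
    generalize Complex.exp (-(w * u)) = E
    field_simp
    ring
  have htend : Tendsto (fun u : ℝ => -((u : ℂ) / w + 1 / w ^ 2) * Complex.exp (-(w * u))) atTop
      (𝓝 0) := by
    refine squeeze_zero_norm' (a := fun u : ℝ =>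
      (1 / (w.re / 2) / ‖w‖ + 1 / ‖w‖ ^ 2) * Real.exp (-(w.re / 2 * u))) ?_ ?_
    · filter_upwards [eventually_ge_atTop 0] with u hu
      rw [norm_mul, norm_cexp_neg, norm_neg]
      have := xexp_bound (by positivity : 0 < w.re / 2) u hu
      have e : Real.exp (-(w.re * u)) = Real.exp (-(w.re / 2 * u)) * Real.exp (-(w.re / 2 * u)) := by
        rw [← Real.exp_add]; congr 1; ring
      have h1 : ‖(u : ℂ) / w + 1 / w ^ 2‖ ≤ u / ‖w‖ + 1 / ‖w‖ ^ 2 := by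
        refine (norm_add_le _ _).trans ?_
        simp [abs_of_nonneg hu]
      rw [e, ← mul_assoc]
      gcongr
      have h2 : Real.exp (-(w.re / 2 * u)) ≤ 1 := by
        rw [Real.exp_le_one_iff]; have := mul_nonneg hw.le hu; linarith
      calc ‖(u : ℂ) / w + 1 / w ^ 2‖ * Real.exp (-(w.re / 2 * u))
          ≤ (u / ‖w‖ + 1 / ‖w‖ ^ 2) * Real.exp (-(w.re / 2 * u)) := by gcongr
        _ = (u * Real.exp (-(w.re / 2 * u))) / ‖w‖ + 1 / ‖w‖ ^ 2 * Real.exp (-(w.re / 2 * u)) := by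
          ring
        _ ≤ 1 / (w.re / 2) / ‖w‖ + 1 / ‖w‖ ^ 2 * 1 := by gcongr
        _ = _ := by ring
    · rw [show (0 : ℝ) = (1 / (w.re / 2) / ‖w‖ + 1 / ‖w‖ ^ 2) * 0 by simp]
      refine Tendsto.const_mul _ (Real.tendsto_exp_neg_atTop_nhds_zero.comp ?_)
      exact tendsto_id.const_mul_atTop (by positivity)
  rw [integral_Ioi_of_hasDerivAt_of_tendsto' hder huint htend]
  simp

lemma kr_laplace {δ : ℝ} (hδ : 0 < δ) {s : ℂ} (hs : 0 < 1 + δ * s.re) :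
    Integrable (fun u : ℝ => (kr δ u : ℂ) * Complex.exp (-(s * u))) ∧
    ∫ u : ℝ, (kr δ u : ℂ) * Complex.exp (-(s * u)) = 1 / (1 + δ * s) ^ 2 := by
  have hw : 0 < (1 / (δ : ℂ) + s).re := by
    have : (1 / (δ : ℂ) + s).re = (1 + δ * s.re) / δ := by
      rw [Complex.add_re, ← Complex.ofReal_one, ← Complex.ofReal_div, Complex.ofReal_re]
      field_simp
    rw [this]; positivity
  obtain ⟨h1, h2⟩ := uexp_lemma hw
  have hδ' : (δ : ℂ) ≠ 0 := by exact_mod_cast hδ.ne'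
  have e : (fun u : ℝ => (kr δ u : ℂ) * Complex.exp (-(s * u))) =
      (Ioi (0 : ℝ)).indicator (fun u : ℝ => (1 / (δ : ℂ) ^ 2) *
        ((u : ℂ) * Complex.exp (-((1 / (δ : ℂ) + s) * u)))) := by
    ext u
    by_cases hu : 0 < u
    · rw [indicator_of_mem (mem_Ioi.2 hu)]
      unfold kr
      rw [max_eq_left hu.le]
      push_cast
      rw [mul_assoc, ← Complex.exp_add, div_eq_mul_one_div, mul_comm (u : ℂ), mul_assoc]
      congr 3
      field_simp
      ring
    · rw [indicator_of_notMem (by simpa using hu), kr_neg δ (not_lt.1 hu)]; simp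
  rw [e]
  constructor
  · exact (integrable_indicator_iff measurableSet_Ioi).2 (h1.const_mul _)
  · rw [integral_indicator measurableSet_Ioi, integral_const_mul, h2]
    have e3 : (1 + (δ : ℂ) * s) = δ * (1 / (δ : ℂ) + s) := by field_simp
    rw [e3, mul_pow, one_div_mul_one_div]

lemma kr_integral {δ : ℝ} (hδ : 0 < δ) : Integrable (fun u : ℝ => (kr δ u : ℂ)) ∧
    ∫ u : ℝ, (kr δ u : ℂ) = 1 := by
  have := kr_laplace hδ (s := 0) (by simp)
  simpa using this

lemma kr_integrable {δ : ℝ} (hδ : 0 < δ) : Integrable (kr δ) := by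
  have := (kr_integral hδ).1.re
  simpa using this

lemma kr_integral_real {δ : ℝ} (hδ : 0 < δ) : ∫ u : ℝ, kr δ u = 1 := by
  have := (kr_integral hδ).2
  rw [integral_complex_ofReal] at this
  exact_mod_cast this

lemma kr_moment {δ : ℝ} (hδ : 0 < δ) (t : ℝ) :
    |t| * kr δ t ≤ (Ioi (0 : ℝ)).indicator (fun t => 8 * Real.exp (-(1 / (2 * δ)) * t)) t := by
  by_cases ht : 0 < t
  · rw [indicator_of_mem (mem_Ioi.2 ht), abs_of_pos ht]
    unfold kr
    rw [max_eq_left ht.le]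
    have := x2exp_bound (by positivity : 0 < 1 / (2 * δ)) t ht.le
    have e : Real.exp (-(t / δ)) = Real.exp (-(1 / (2 * δ) * t)) * Real.exp (-(1 / (2 * δ)) * t) := by
      rw [← Real.exp_add]; congr 1; field_simp; ring
    rw [e]
    calc t * (t / δ ^ 2 * (Real.exp (-(1 / (2 * δ) * t)) * Real.exp (-(1 / (2 * δ)) * t)))
        = (t ^ 2 * Real.exp (-(1 / (2 * δ) * t))) / δ ^ 2 * Real.exp (-(1 / (2 * δ)) * t) := by ring
      _ ≤ (2 / (1 / (2 * δ)) ^ 2) / δ ^ 2 * Real.exp (-(1 / (2 * δ)) * t) := by gcongr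
      _ = _ := by congr 1; field_simp; norm_num
  · rw [indicator_of_notMem (by simpa using ht), kr_neg δ (not_lt.1 ht)]; simp

lemma smooth_conv {g : ℝ → ℂ} (hg : Continuous g) (h0 : ∀ x ≤ 0, g x = 0) {C : ℝ}
    (hC : ∀ x, ‖g x‖ ≤ C) {δ : ℝ} (hδ : 0 < δ) :
    ∃ h : ℝ → ℂ, Continuous h ∧ (∀ x ≤ 0, h x = 0) ∧
    (∀ x, h x = ∫ t : ℝ, (kr δ t : ℂ) * g (x - t)) ∧
    (∀ s : ℂ, 0 < 1 + δ * s.re → Integrable (fun x : ℝ => g x * Complex.exp (-(s * x))) →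
      Integrable (fun x : ℝ => h x * Complex.exp (-(s * x))) ∧
      Laplace h s = 1 / (1 + δ * s) ^ 2 * Laplace g s) := by
  have hk := (kr_integral hδ).1
  refine ⟨fun x => ∫ t : ℝ, (kr δ t : ℂ) * g (x - t), ?_, ?_, fun x => rfl, ?_⟩
  · exact BddAbove.continuous_convolution_right_of_integrable (ContinuousLinearMap.mul ℝ ℂ)
      ⟨C, by rintro _ ⟨x, rfl⟩; exact hC x⟩ hk hg
  · intro x hx
    have : (fun t : ℝ => (kr δ t : ℂ) * g (x - t)) = fun _ => 0 := by
      ext t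
      by_cases ht : 0 < t
      · rw [h0 _ (by linarith), mul_zero]
      · rw [kr_neg δ (not_lt.1 ht)]; simp
    dsimp only
    rw [this, integral_zero]
  · intro s hs hgi
    obtain ⟨k1, k2⟩ := kr_laplace hδ hs
    have e : (fun x : ℝ => (∫ t : ℝ, (kr δ t : ℂ) * g (x - t)) * Complex.exp (-(s * x))) =
        ((fun u : ℝ => (kr δ u : ℂ) * Complex.exp (-(s * u))) ⋆[ContinuousLinearMap.mul ℝ ℂ, volume]
          (fun x : ℝ => g x * Complex.exp (-(s * x)))) := by
      ext x
      rw [convolution_def, ← integral_mul_const]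
      congr 1
      ext t
      simp only [ContinuousLinearMap.mul_apply']
      rw [show Complex.exp (-(s * x)) = Complex.exp (-(s * t)) * Complex.exp (-(s * ((x - t : ℝ) : ℂ)))
        by rw [← Complex.exp_add]; congr 1; push_cast; ring]
      ring
    have hh0 : ∀ x ≤ 0, (∫ t : ℝ, (kr δ t : ℂ) * g (x - t)) = 0 := by
      intro x hx
      have : (fun t : ℝ => (kr δ t : ℂ) * g (x - t)) = fun _ => 0 := by
        ext t
        by_cases ht : 0 < t
        · rw [h0 _ (by linarith), mul_zero]
        · rw [kr_neg δ (not_lt.1 ht)]; simp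
      rw [this, integral_zero]
    refine ⟨?_, ?_⟩
    · rw [e]; exact k1.integrable_convolution _ hgi
    · rw [Laplace_full hh0, Laplace_full h0, e, integral_convolution _ k1 hgi, k2]
      simp

lemma smooth_close {g : ℝ → ℂ} (hg : Continuous g) {C : ℝ}
    (hC : ∀ x, ‖g x‖ ≤ C) (hu : UniformContinuous g) {ε : ℝ} (hε : 0 < ε) :
    ∃ δ₀ > 0, ∀ δ, 0 < δ → δ ≤ δ₀ → ∀ x : ℝ, ‖g x - ∫ t : ℝ, (kr δ t : ℂ) * g (x - t)‖ ≤ ε := by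
  have hC0 : 0 ≤ C := (norm_nonneg _).trans (hC 0)
  obtain ⟨η, hη, hη'⟩ := Metric.uniformContinuous_iff.1 hu (ε / 2) (by positivity)
  set A := 2 * C / η with hA
  have hA0 : 0 ≤ A := by positivity
  have hgt : ∀ x t, ‖g x - g (x - t)‖ ≤ ε / 2 + A * |t| := by
    intro x t
    by_cases ht : |t| < η
    · have := hη' (a := x) (b := x - t) (by rw [Real.dist_eq]; simpa using ht)
      rw [dist_eq_norm] at this
      have := mul_nonneg hA0 (abs_nonneg t)
      linarith
    · have h1 : ‖g x - g (x - t)‖ ≤ 2 * C := (norm_sub_le _ _).trans (by linarith [hC x, hC (x - t)])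
      have h2 : 2 * C ≤ A * |t| := by
        calc 2 * C = A * η := by rw [hA]; field_simp
          _ ≤ _ := by gcongr; exact not_lt.1 ht
      linarith
  refine ⟨ε / 2 / (16 * (A + 1)), by positivity, fun δ hδ hδ' x => ?_⟩
  obtain ⟨k1, k2⟩ := kr_integral hδ
  have hi : Integrable (fun t : ℝ => (kr δ t : ℂ) * g (x - t)) := by
    refine k1.mul_bdd (c := C) (by fun_prop) (Eventually.of_forall fun t => hC _)
  have e1 : g x - ∫ t : ℝ, (kr δ t : ℂ) * g (x - t) = ∫ t : ℝ, (kr δ t : ℂ) * (g x - g (x - t)) := by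
    simp only [mul_sub]
    rw [integral_sub (k1.mul_const _) hi, integral_mul_const, k2, one_mul]
  have hexp := exp_neg_integrableOn_Ioi 0 (by positivity : 0 < 1 / (2 * δ))
  have hb2 : Integrable ((Ioi (0 : ℝ)).indicator (fun t => 8 * Real.exp (-(1 / (2 * δ)) * t))) :=
    (integrable_indicator_iff measurableSet_Ioi).2 (hexp.const_mul 8)
  rw [e1]
  refine (norm_integral_le_of_norm_le (g := fun t => ε / 2 * kr δ t +
    A * (Ioi (0 : ℝ)).indicator (fun t => 8 * Real.exp (-(1 / (2 * δ)) * t)) t)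
    (((kr_integrable hδ).const_mul _).add (hb2.const_mul A)) (Eventually.of_forall fun t => ?_)).trans ?_
  · rw [norm_mul, Complex.norm_real, Real.norm_of_nonneg (kr_nonneg δ t)]
    calc kr δ t * ‖g x - g (x - t)‖ ≤ kr δ t * (ε / 2 + A * |t|) := by
          gcongr
          · exact kr_nonneg δ t
          · exact hgt x t
      _ = ε / 2 * kr δ t + A * (|t| * kr δ t) := by ring
      _ ≤ _ := by gcongr; exact kr_moment hδ t
  · rw [integral_add ((kr_integrable hδ).const_mul _) (hb2.const_mul A), integral_const_mul,
      integral_const_mul, kr_integral_real hδ, integral_indicator measurableSet_Ioi,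
      integral_const_mul, integral_exp_mul_Ioi (by simpa using hδ)]
    have : A * (8 * (2 * δ)) ≤ ε / 2 := by
      calc A * (8 * (2 * δ)) ≤ (A + 1) * (8 * (2 * (ε / 2 / (16 * (A + 1))))) := by gcongr; linarith
        _ = ε / 2 := by field_simp; norm_num
    have e2 : -Real.exp (-(1 / (2 * δ)) * 0) / -(1 / (2 * δ)) = 2 * δ := by
      rw [mul_zero, Real.exp_zero]; field_simp
    rw [e2]; linarith


lemma one_sub_inv_bound {z : ℂ} (hz : ‖z‖ ≤ 1 / 2) : ‖1 - 1 / (1 + z) ^ 2‖ ≤ 10 * ‖z‖ := by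
  have h1 : 1 / 2 ≤ ‖1 + z‖ := by
    have := norm_sub_norm_le (1 : ℂ) (-z)
    rw [sub_neg_eq_add, norm_neg, norm_one] at this
    linarith
  have h0 : (1 + z) ≠ 0 := by rw [← norm_pos_iff]; linarith
  have e : 1 - 1 / (1 + z) ^ 2 = z * (2 + z) / (1 + z) ^ 2 := by field_simp; ring
  rw [e, norm_div, norm_mul, norm_pow]
  have h2 : ‖2 + z‖ ≤ 5 / 2 := (norm_add_le _ _).trans (by norm_num; linarith)
  rw [div_le_iff₀ (by positivity)]
  have h3 : 1 / 4 ≤ ‖1 + z‖ ^ 2 := by nlinarith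
  calc ‖z‖ * ‖2 + z‖ ≤ ‖z‖ * (5 / 2) := by gcongr
    _ = 10 * ‖z‖ * (1 / 4) := by ring
    _ ≤ _ := by gcongr

lemma Rbar_subset_WW {α r a b ρ₀ : ℝ} (ha : a < α) (hb : 1 < b) (hρ : r < ρ₀) :
    Rbar α r ⊆ WW a b ρ₀ := fun s hs =>
  ⟨by linarith [hs.1], by linarith [hs.2.1], by linarith [hs.2.2]⟩

lemma Laplace_integrable {g : ℝ → ℂ} (hg : Continuous g) (h0 : ∀ x ≤ 0, g x = 0) {C κ₁ : ℝ}
    (hC : ∀ x, 0 ≤ x → ‖g x‖ ≤ C * Real.exp (-(κ₁ * x))) {s : ℂ} (hs : -κ₁ < s.re) :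
    Integrable (fun x : ℝ => g x * Complex.exp (-(s * x))) := by
  have hp : 0 < κ₁ + s.re := by linarith
  refine Integrable.mono' (g := (Ioi (0 : ℝ)).indicator fun x => C * Real.exp (-(κ₁ + s.re) * x))
    ((integrable_indicator_iff measurableSet_Ioi).2
      ((exp_neg_integrableOn_Ioi 0 hp).const_mul C)) (by fun_prop) (Eventually.of_forall fun x => ?_)
  by_cases hx : 0 < x
  · rw [indicator_of_mem (mem_Ioi.2 hx), norm_mul, norm_cexp_neg]
    calc ‖g x‖ * Real.exp (-(s.re * x)) ≤ C * Real.exp (-(κ₁ * x)) * Real.exp (-(s.re * x)) := by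
          gcongr; exact hC x hx.le
      _ = _ := by rw [mul_assoc, ← Real.exp_add]; congr 2; ring
  · rw [indicator_of_notMem (by simpa using hx), h0 x (not_lt.1 hx)]; simp

lemma core1 {α r β κ₁ a b ρ₀ : ℝ} (hα : α < 0) (hr : 0 < r) (hβ : β < α) {D : Set ℂ}
    (hD : D ⊆ {ζ : ℂ | ζ.re < β})
    (hacc : ∃ z : ℂ, z.re < β ∧ AccPt z (Filter.principal D)) (hκ₁ : 0 < κ₁)
    (ha : a < α) (hb : 1 < b) (hρ : r < ρ₀) {g : ℝ → ℂ} (hg : Continuous g)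
    (h0 : ∀ x ≤ 0, g x = 0) {C : ℝ} (hC : ∀ x, 0 ≤ x → ‖g x‖ ≤ C * Real.exp (-(κ₁ * x)))
    {H : ℂ → ℂ} (hH : DifferentiableOn ℂ H (WW a b ρ₀))
    (hL : ∀ s ∈ WW a b ρ₀, -κ₁ < s.re → Laplace g s = s * H s) : Approx α r D g H := by
  apply Approx.of_close
  intro ε hε
  obtain ⟨κ, hκ, hκ1, hκα⟩ : ∃ κ : ℝ, 0 < κ ∧ κ < κ₁ ∧ α < -κ := by
    refine ⟨min κ₁ (-α) / 2, ?_, ?_, ?_⟩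
    · have : 0 < min κ₁ (-α) := lt_min hκ₁ (by linarith)
      linarith
    · have := min_le_left κ₁ (-α)
      linarith
    · have := min_le_right κ₁ (-α)
      linarith
  have hC0 : 0 ≤ C := by
    have := (norm_nonneg _).trans (hC 0 le_rfl); simpa using this
  have hCb : ∀ x, ‖g x‖ ≤ C := by
    intro x
    by_cases hx : 0 ≤ x
    · refine (hC x hx).trans ?_
      have : Real.exp (-(κ₁ * x)) ≤ 1 := by
        rw [Real.exp_le_one_iff]; have := mul_nonneg hκ₁.le hx; linarith
      nlinarith
    · rw [h0 x (by linarith), norm_zero]; exact hC0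
  have hu : UniformContinuous g := by
    refine hg.uniformContinuous_of_tendsto_cocompact (x := 0) ?_
    rw [cocompact_eq_atBot_atTop, tendsto_sup]
    constructor
    · refine tendsto_const_nhds.congr' ?_
      filter_upwards [eventually_le_atBot 0] with x hx
      rw [h0 x hx]
    · refine squeeze_zero_norm' (a := fun x => C * Real.exp (-(κ₁ * x))) ?_ ?_
      · filter_upwards [eventually_ge_atTop 0] with x hx using hC x hx
      · rw [show (0 : ℝ) = C * 0 by simp]
        refine Tendsto.const_mul _ (Real.tendsto_exp_neg_atTop_nhds_zero.comp ?_)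
        exact tendsto_id.const_mul_atTop hκ₁
  obtain ⟨δ₀, hδ₀, hclose⟩ := smooth_close hg hCb hu hε
  have hHc : ContinuousOn H (Rbar α r) := (hH.continuousOn).mono (Rbar_subset_WW ha hb hρ)
  obtain ⟨M, hM⟩ := (isCompact_Rbar α r).exists_bound_of_continuousOn hHc
  set M' := max M 0 with hM'
  have hM0 : 0 ≤ M' := le_max_right _ _
  set Q := |a| + κ + 1 + r with hQ
  have hQ0 : 0 < Q := by positivity
  set δ := min δ₀ (min (1 / (2 * Q)) (ε / (10 * Q * (M' + 1)))) with hδd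
  have hδ : 0 < δ := by positivity
  have hδ1 : δ ≤ δ₀ := min_le_left _ _
  have hδ2 : δ * Q ≤ 1 / 2 := by
    have : δ ≤ 1 / (2 * Q) := (min_le_right _ _).trans (min_le_left _ _)
    calc δ * Q ≤ 1 / (2 * Q) * Q := by gcongr
      _ = 1 / 2 := by field_simp
  have hδ3 : 10 * (δ * Q) * M' ≤ ε := by
    have : δ ≤ ε / (10 * Q * (M' + 1)) := (min_le_right _ _).trans (min_le_right _ _)
    calc 10 * (δ * Q) * M' ≤ 10 * (ε / (10 * Q * (M' + 1)) * Q) * (M' + 1) := by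
          gcongr; linarith
      _ = ε := by field_simp
  have hδa : δ * |a| ≤ 1 / 2 := le_trans (by gcongr; rw [hQ]; linarith) hδ2
  have hδκ : δ * κ ≤ 1 / 2 := le_trans (by gcongr; rw [hQ]; linarith [abs_nonneg a]) hδ2
  have hpos : ∀ s : ℂ, a ≤ s.re → 0 < 1 + δ * s.re := by
    intro s hs
    have : -|a| ≤ s.re := (neg_abs_le a).trans hs
    nlinarith
  have hne : ∀ s : ℂ, a ≤ s.re → (1 + (δ : ℂ) * s) ≠ 0 := by
    intro s hs h
    have := congrArg Complex.re h
    have h2 := hpos s hs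
    simp at this
    linarith
  obtain ⟨h, hh1, hh2, hh3, hh4⟩ := smooth_conv hg h0 hCb hδ
  have hlap : ∀ s : ℂ, a ≤ s.re → -κ ≤ s.re →
      Integrable (fun x : ℝ => h x * Complex.exp (-(s * x))) ∧
      Laplace h s = 1 / (1 + δ * s) ^ 2 * Laplace g s := fun s h1 h2 =>
    hh4 s (hpos s h1) (Laplace_integrable hg h0 hC (by linarith))
  refine ⟨h, fun s => H s * (1 / (1 + δ * s) ^ 2), ?_, ?_, ?_⟩
  · refine core2 hα hr hβ hD hacc hκ hκα ha hb hρ hh1 hh2 ?_ ?_ ?_ ?_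
    · have := (hlap (-κ : ℂ) (by simp; linarith) (by simp)).1
      refine this.congr (Eventually.of_forall fun x => ?_)
      simp [mul_comm]
    · have e : (fun y : ℝ => Laplace h (-κ + y * Complex.I)) = fun y : ℝ =>
          1 / (1 + δ * (-κ + y * Complex.I)) ^ 2 * Laplace g (-κ + y * Complex.I) := by
        ext y
        exact (hlap (-κ + y * Complex.I) (by simp; linarith) (by simp)).2
      rw [e]
      have hgi := Laplace_integrable hg h0 hC (s := (-κ : ℂ)) (by simp; linarith)
      have hnorm : ∀ y x : ℝ, ‖g x * Complex.exp (-((-κ + y * Complex.I) * x))‖ =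
          ‖g x * Complex.exp (-((-κ : ℂ) * x))‖ := by
        intro y x
        rw [norm_mul, norm_mul, norm_cexp_neg, norm_cexp_neg]; simp
      have hLc : Continuous fun y : ℝ => Laplace g (-κ + y * Complex.I) := by
        simp only [Laplace_full h0]
        refine continuous_of_dominated (bound := fun x => ‖g x * Complex.exp (-((-κ : ℂ) * x))‖)
          (fun y => by fun_prop) (fun y => Eventually.of_forall fun x => (hnorm y x).le) hgi.norm
          (Eventually.of_forall fun x => by fun_prop)
      have hLb : ∀ y : ℝ, ‖Laplace g (-κ + y * Complex.I)‖ ≤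
          ∫ x : ℝ, ‖g x * Complex.exp (-((-κ : ℂ) * x))‖ := by
        intro y
        rw [Laplace_full h0]
        refine (norm_integral_le_integral_norm _).trans_eq ?_
        simp only [hnorm]
      have hmi : Integrable fun y : ℝ => 1 / (1 + (δ : ℂ) * (-κ + y * Complex.I)) ^ 2 := by
        have hmc : Continuous fun y : ℝ => 1 / (1 + (δ : ℂ) * (-κ + y * Complex.I)) ^ 2 := by
          refine continuous_const.div (by fun_prop) fun y => pow_ne_zero 2 (hne _ ?_)
          simp; linarith
        set c := min (1 / 4) (δ ^ 2) with hcd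
        have hc : 0 < c := by positivity
        refine Integrable.mono' (integrable_inv_one_add_sq.const_mul c⁻¹)
          hmc.aestronglyMeasurable (Eventually.of_forall fun y => ?_)
        rw [norm_div, norm_one, norm_pow, Complex.sq_norm, Complex.normSq_apply, ← mul_inv,
          one_div]
        have hc1 : c ≤ 1 / 4 := min_le_left _ _
        have hc2 : c ≤ δ ^ 2 := min_le_right _ _
        refine inv_anti₀ (by positivity) ?_
        simp
        nlinarith [mul_le_mul_of_nonneg_right hc2 (sq_nonneg y)]
      exact hmi.mul_bdd (c := ∫ x : ℝ, ‖g x * Complex.exp (-((-κ : ℂ) * x))‖)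
        hLc.aestronglyMeasurable (Eventually.of_forall hLb)
    · refine hH.mul ?_
      intro s hs
      have := pow_ne_zero 2 (hne s hs.1.le)
      refine DifferentiableAt.differentiableWithinAt ?_
      refine (differentiableAt_const _).div (by fun_prop) this
    · intro s hs hsκ
      rw [(hlap s hs.1.le hsκ).2, hL s hs (by linarith)]
      ring
  · intro x _
    rw [hh3]
    exact hclose δ hδ hδ1 x
  · intro s hs
    have hsn : ‖s‖ ≤ Q := by
      have h1 := Complex.norm_le_abs_re_add_abs_im s
      have h2 : |s.re| ≤ |a| + 1 := by
        rw [abs_le]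
        have := neg_abs_le a
        have := abs_nonneg a
        exact ⟨by linarith [hs.1], by linarith [hs.2.1]⟩
      rw [hQ]
      linarith [hs.2.2]
    have hz : ‖(δ : ℂ) * s‖ ≤ δ * Q := by
      rw [norm_mul, Complex.norm_real, Real.norm_of_nonneg hδ.le]; gcongr
    have := one_sub_inv_bound (hz.trans hδ2)
    have e : H s - H s * (1 / (1 + δ * s) ^ 2) = (1 - 1 / (1 + δ * s) ^ 2) * H s := by ring
    dsimp only
    rw [e, norm_mul]
    calc ‖1 - 1 / (1 + δ * s) ^ 2‖ * ‖H s‖ ≤ (10 * (δ * Q)) * M' := by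
          gcongr
          · exact this.trans (by gcongr)
          · exact (hM s hs).trans (le_max_left _ _)
      _ ≤ ε := hδ3


lemma growth {T T' : ℝ → ℂ} (hT : ∀ x, HasDerivAt T (T' x) x) (hT0 : ∀ x ≤ 0, T x = 0)
    (hT'0 : ∀ x ≤ 0, T' x = 0) (hc : Continuous T') (hlim : Tendsto T' atTop (𝓝 0))
    {ε₁ : ℝ} (hε₁ : 0 < ε₁) :
    ∃ M R : ℝ, 0 ≤ M ∧ 0 ≤ R ∧ (∀ x, ‖T' x‖ ≤ M) ∧ (∀ x, R ≤ x → ‖T' x‖ ≤ ε₁) ∧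
      ∀ x, 0 ≤ x → ‖T x‖ ≤ M * R + ε₁ * x := by
  have h1 : ∀ᶠ x in atTop, ‖T' x‖ < ε₁ := by
    have := hlim.norm
    rw [norm_zero] at this
    exact this.eventually (gt_mem_nhds hε₁)
  obtain ⟨R₀, hR₀⟩ := eventually_atTop.1 h1
  set R := max R₀ 0
  have hR : ∀ x, R ≤ x → ‖T' x‖ ≤ ε₁ := fun x hx => (hR₀ x ((le_max_left _ _).trans hx)).le
  have hR0 : 0 ≤ R := le_max_right _ _
  obtain ⟨M₀, hM₀⟩ := (isCompact_Icc (a := (0 : ℝ)) (b := R)).exists_bound_of_continuousOn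
    hc.continuousOn
  have hM : ∀ x, ‖T' x‖ ≤ max M₀ ε₁ := by
    intro x
    by_cases hx : x ≤ 0
    · rw [hT'0 x hx, norm_zero]; exact hε₁.le.trans (le_max_right _ _)
    · by_cases hxR : x ≤ R
      · exact (hM₀ x ⟨by linarith, hxR⟩).trans (le_max_left _ _)
      · exact (hR x (by linarith)).trans (le_max_right _ _)
  have hM0 : 0 ≤ max M₀ ε₁ := hε₁.le.trans (le_max_right _ _)
  have hb : ∀ x, 0 ≤ x → ‖T x‖ ≤ max M₀ ε₁ * x := by
    intro x hx
    have := (convex_univ (𝕜 := ℝ) (E := ℝ)).norm_image_sub_le_of_norm_hasDerivWithin_le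
      (fun y _ => (hT y).hasDerivWithinAt) (fun y _ => hM y) (mem_univ 0) (mem_univ x)
    rw [hT0 0 le_rfl, sub_zero, sub_zero, Real.norm_of_nonneg hx] at this
    exact this
  refine ⟨max M₀ ε₁, R, hM0, hR0, hM, hR, ?_⟩
  intro x hx
  by_cases hxR : x ≤ R
  · refine (hb x hx).trans ?_
    have := mul_nonneg hε₁.le hx
    have := mul_le_mul_of_nonneg_left hxR hM0
    linarith
  · have hxR : R ≤ x := by linarith
    have h2 := (convex_Ici (𝕜 := ℝ) R).norm_image_sub_le_of_norm_hasDerivWithin_le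
      (fun y _ => (hT y).hasDerivWithinAt) (fun y hy => hR y hy) (mem_Ici.2 le_rfl) (mem_Ici.2 hxR)
    rw [Real.norm_of_nonneg (by linarith)] at h2
    have h3 := norm_sub_norm_le (T x) (T R)
    have h4 := hb R hR0
    have h5 := mul_nonneg hε₁.le hR0
    linarith

lemma lin_exp {A B c : ℝ} (hA : 0 ≤ A) (hB : 0 ≤ B) (hc : 0 < c) {x : ℝ} (hx : 0 ≤ x) :
    A + B * x ≤ (A + B / c) * Real.exp (-(-c * x)) := by
  have h1 := Real.add_one_le_exp (c * x)
  rw [show -(-c * x) = c * x by ring]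
  have hcx : 0 ≤ c * x := by positivity
  have e : B * x = B / c * (c * x) := by field_simp
  rw [e]
  have : 0 ≤ B / c := by positivity
  nlinarith

lemma Laplace_deriv {T T' : ℝ → ℂ} (hT : ∀ x, HasDerivAt T (T' x) x) (hT0 : ∀ x ≤ 0, T x = 0)
    (hT'0 : ∀ x ≤ 0, T' x = 0) (hc : Continuous T') (hlim : Tendsto T' atTop (𝓝 0))
    {w : ℂ} (hw : 0 < w.re) :
    Integrable (fun x : ℝ => T x * Complex.exp (-(w * x))) ∧
    Integrable (fun x : ℝ => T' x * Complex.exp (-(w * x))) ∧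
    Laplace T' w = w * Laplace T w := by
  obtain ⟨M, R, hM0, hR0, hM, -, hg⟩ := growth hT hT0 hT'0 hc hlim one_pos
  have hTc : Continuous T := continuous_iff_continuousAt.2 fun x => (hT x).continuousAt
  have b1 : ∀ x, 0 ≤ x → ‖T x‖ ≤ (M * R + 1 / (w.re / 2)) * Real.exp (-(-(w.re / 2) * x)) :=
    fun x hx => (hg x hx).trans (lin_exp (by positivity) zero_le_one (by positivity) hx)
  have b2 : ∀ x, 0 ≤ x → ‖T' x‖ ≤ (M + 0 / (w.re / 2)) * Real.exp (-(-(w.re / 2) * x)) :=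
    fun x hx => (hM x).trans (le_trans (by simp) (lin_exp hM0 le_rfl (by positivity) hx))
  have i1 := Laplace_integrable hTc hT0 b1 (s := w) (by linarith)
  have i2 := Laplace_integrable hc hT'0 b2 (s := w) (by linarith)
  refine ⟨i1, i2, ?_⟩
  have hder : ∀ x ∈ Ici (0 : ℝ), HasDerivAt (fun x : ℝ => T x * Complex.exp (-(w * x)))
      (T' x * Complex.exp (-(w * x)) - w * (T x * Complex.exp (-(w * x)))) x := by
    intro x _
    have h1 : HasDerivAt (fun u : ℝ => (u : ℂ)) 1 x := Complex.ofRealCLM.hasDerivAt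
    have h3 : HasDerivAt (fun u : ℝ => Complex.exp (-(w * u)))
        (Complex.exp (-(w * x)) * (-(w * 1))) x := ((h1.const_mul w).neg).cexp
    refine ((hT x).mul h3).congr_deriv ?_
    ring
  have htend : Tendsto (fun x : ℝ => T x * Complex.exp (-(w * x))) atTop (𝓝 0) := by
    refine squeeze_zero_norm' (a := fun x => (M * R + 1 / (w.re / 2)) *
      Real.exp (-(w.re / 2 * x))) ?_ ?_
    · filter_upwards [eventually_ge_atTop 0] with x hx
      rw [norm_mul, norm_cexp_neg]
      calc ‖T x‖ * Real.exp (-(w.re * x)) ≤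
          (M * R + 1 / (w.re / 2)) * Real.exp (-(-(w.re / 2) * x)) * Real.exp (-(w.re * x)) := by
            gcongr; exact b1 x hx
        _ = _ := by rw [mul_assoc, ← Real.exp_add]; congr 2; ring
    · rw [show (0 : ℝ) = (M * R + 1 / (w.re / 2)) * 0 by simp]
      refine Tendsto.const_mul _ (Real.tendsto_exp_neg_atTop_nhds_zero.comp ?_)
      exact tendsto_id.const_mul_atTop (by positivity)
  have := integral_Ioi_of_hasDerivAt_of_tendsto' hder
    (i2.integrableOn.sub (i1.integrableOn.const_mul w)) htend
  rw [integral_sub i2.integrableOn (i1.integrableOn.const_mul w), integral_const_mul,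
    hT0 0 le_rfl, zero_mul, sub_zero, sub_eq_zero] at this
  exact this

lemma isCompact_rect (p q u v : ℝ) : IsCompact {s : ℂ | p ≤ s.re ∧ s.re ≤ q ∧ u ≤ s.im ∧ s.im ≤ v} := by
  have := (isCompact_Icc (a := p) (b := q)).reProdIm (isCompact_Icc (a := u) (b := v))
  convert this using 1
  ext s
  simp [Complex.mem_reProdIm, and_assoc]

lemma core0 {α r β a b ρ₀ : ℝ} (hα : α < 0) (hr : 0 < r) (hβ : β < α) {D : Set ℂ}
    (hD : D ⊆ {ζ : ℂ | ζ.re < β})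
    (hacc : ∃ z : ℂ, z.re < β ∧ AccPt z (Filter.principal D))
    (ha : a < α) (hb : 1 < b) (hρ : r < ρ₀) {T T' : ℝ → ℂ}
    (hT : ∀ x, HasDerivAt T (T' x) x) (hT0 : ∀ x ≤ 0, T x = 0)
    (hT'0 : ∀ x ≤ 0, T' x = 0) (hc : Continuous T') (hlim : Tendsto T' atTop (𝓝 0))
    {F : ℂ → ℂ} (hF : DifferentiableOn ℂ F (WW a b ρ₀))
    (hL : ∀ s ∈ WW a b ρ₀, 0 < s.re → F s = Laplace T s) : Approx α r D T' F := by
  apply Approx.of_close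
  intro ε hε
  obtain ⟨M, R, hM0, hR0, hM, hR, hg⟩ := growth hT hT0 hT'0 hc hlim (by positivity : 0 < ε / 4)
  have hTc : Continuous T := continuous_iff_continuousAt.2 fun x => (hT x).continuousAt
  -- uniform continuity of F
  set K : Set ℂ := {s : ℂ | α ≤ s.re ∧ s.re ≤ (1 + b) / 2 ∧ -r ≤ s.im ∧ s.im ≤ r} with hK
  have hKc : IsCompact K := isCompact_rect _ _ _ _
  have hKW : K ⊆ WW a b ρ₀ := fun s hs =>
    ⟨by linarith [hs.1], by linarith [hs.2.1], (abs_le.2 hs.2.2).trans_lt hρ⟩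
  have hFu := hKc.uniformContinuousOn_of_continuous (hF.continuousOn.mono hKW)
  obtain ⟨η₀, hη₀, hF'⟩ := Metric.uniformContinuousOn_iff.1 hFu ε hε
  set η := min (min (η₀ / 2) ((b - 1) / 2)) (ε / (4 * (M * R + 1))) with hηd
  have hη : 0 < η := by
    have : 0 < b - 1 := by linarith
    positivity
  have hη1 : η < η₀ := ((min_le_left _ _).trans (min_le_left _ _)).trans_lt (by linarith)
  have hη2 : η ≤ (b - 1) / 2 := (min_le_left _ _).trans (min_le_right _ _)
  have hη3 : η * (M * R) ≤ ε / 4 := by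
    have : η ≤ ε / (4 * (M * R + 1)) := min_le_right _ _
    calc η * (M * R) ≤ ε / (4 * (M * R + 1)) * (M * R + 1) := by gcongr; linarith
      _ = ε / 4 := by field_simp
  have hE1 : ∀ x, 0 ≤ x → Real.exp (-(η * x)) ≤ 1 := fun x hx => by
    rw [Real.exp_le_one_iff]; have := mul_nonneg hη.le hx; linarith
  have hnE : ∀ x : ℝ, ‖Complex.exp (-((η : ℂ) * x))‖ = Real.exp (-(η * x)) := fun x => by
    rw [norm_cexp_neg, Complex.ofReal_re]
  refine ⟨fun x => Complex.exp (-((η : ℂ) * x)) * (T' x - η * T x), fun s => F (s + η), ?_, ?_, ?_⟩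
  · refine core1 (a := a - η) (b := b - η) (ρ₀ := ρ₀) (κ₁ := η / 2) (C := M + η * (M * R) + ε / 2)
      hα hr hβ hD hacc (by positivity) (by linarith) (by linarith) hρ (by fun_prop) ?_ ?_ ?_ ?_
    · intro x hx
      simp [hT0 x hx, hT'0 x hx]
    · intro x hx
      rw [norm_mul, hnE]
      have h1 : ‖T' x - η * T x‖ ≤ M + η * (M * R + ε / 4 * x) := by
        refine (norm_sub_le _ _).trans ?_
        rw [norm_mul, Complex.norm_real, Real.norm_of_nonneg hη.le]
        gcongr
        · exact hM x
        · exact hg x hx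
      have h2 := xexp_bound (by positivity : 0 < η / 2) x hx
      have e : Real.exp (-(η * x)) = Real.exp (-(η / 2 * x)) * Real.exp (-(η / 2 * x)) := by
        rw [← Real.exp_add]; congr 1; ring
      have h3 : Real.exp (-(η / 2 * x)) ≤ 1 := by
        rw [Real.exp_le_one_iff]; have := mul_nonneg hη.le hx; linarith
      rw [e]
      calc Real.exp (-(η / 2 * x)) * Real.exp (-(η / 2 * x)) * ‖T' x - η * T x‖
          ≤ Real.exp (-(η / 2 * x)) * Real.exp (-(η / 2 * x)) * (M + η * (M * R + ε / 4 * x)) := by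
            gcongr
        _ = ((M + η * (M * R)) * Real.exp (-(η / 2 * x)) +
              η * (ε / 4) * (x * Real.exp (-(η / 2 * x)))) * Real.exp (-(η / 2 * x)) := by ring
        _ ≤ ((M + η * (M * R)) * 1 + η * (ε / 4) * (1 / (η / 2))) * Real.exp (-(η / 2 * x)) := by
            gcongr
        _ = _ := by congr 1; field_simp; ring
    · refine hF.comp (by fun_prop) ?_
      intro s hs
      exact ⟨by simp; linarith [hs.1], by simp; linarith [hs.2.1], by simpa using hs.2.2⟩
    · intro s hs hsre
      have hw : 0 < (s + η).re := by simp; linarith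
      have hwW : s + η ∈ WW a b ρ₀ :=
        ⟨by simp; linarith [hs.1], by simp; linarith [hs.2.1], by simpa using hs.2.2⟩
      obtain ⟨i1, i2, hd⟩ := Laplace_deriv hT hT0 hT'0 hc hlim hw
      rw [hL _ hwW hw]
      have e : Laplace (fun x => Complex.exp (-((η : ℂ) * x)) * (T' x - η * T x)) s =
          Laplace T' (s + η) - η * Laplace T (s + η) := by
        unfold Laplace
        rw [← integral_const_mul, ← integral_sub i2.integrableOn (i1.integrableOn.const_mul _)]
        congr 1
        ext x
        rw [show -((s + η) * (x : ℂ)) = -((η : ℂ) * x) + -(s * x) by ring, Complex.exp_add]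
        ring
      rw [e, hd]
      ring
  · intro x hx
    have e : T' x - Complex.exp (-((η : ℂ) * x)) * (T' x - η * T x) =
        (1 - Complex.exp (-((η : ℂ) * x))) * T' x + Complex.exp (-((η : ℂ) * x)) * (η * T x) := by
      ring
    dsimp only
    rw [e]
    refine (norm_add_le _ _).trans ?_
    have h2 : ‖Complex.exp (-((η : ℂ) * x)) * (η * T x)‖ ≤ ε / 4 + ε / 4 := by
      rw [norm_mul, hnE, norm_mul, Complex.norm_real, Real.norm_of_nonneg hη.le]
      have h3 := xexp_bound hη x hx
      calc Real.exp (-(η * x)) * (η * ‖T x‖) ≤ Real.exp (-(η * x)) * (η * (M * R + ε / 4 * x)) := by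
            gcongr; exact hg x hx
        _ = Real.exp (-(η * x)) * (η * (M * R)) + η * (ε / 4) * (x * Real.exp (-(η * x))) := by ring
        _ ≤ 1 * (η * (M * R)) + η * (ε / 4) * (1 / η) := by
            gcongr; exact hE1 x hx
        _ = η * (M * R) + ε / 4 := by field_simp
        _ ≤ _ := by linarith
    have h1 : ‖(1 - Complex.exp (-((η : ℂ) * x))) * T' x‖ ≤ ε / 4 := by
      have e2 : (1 - Complex.exp (-((η : ℂ) * x))) = ((1 - Real.exp (-(η * x)) : ℝ) : ℂ) := by
        push_cast; rfl
      rw [norm_mul, e2, Complex.norm_real, Real.norm_of_nonneg (by linarith [hE1 x hx])]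
      by_cases hxR : x ≤ R
      · have h5 := Real.add_one_le_exp (-(η * x))
        calc (1 - Real.exp (-(η * x))) * ‖T' x‖ ≤ (η * R) * M := by
              gcongr
              · have := mul_le_mul_of_nonneg_left hxR hη.le
                linarith
              · exact hM x
          _ = η * (M * R) := by ring
          _ ≤ _ := hη3
      · have h6 := hR x (by linarith)
        have h7 := Real.exp_pos (-(η * x))
        nlinarith [norm_nonneg (T' x)]
    linarith
  · intro s hs
    have h1 : s ∈ K := ⟨hs.1, by linarith [hs.2.1], abs_le.1 hs.2.2⟩
    have h2 : s + η ∈ K := ⟨by simp; linarith [hs.1], by simp; linarith [hs.2.1],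
      by simpa using abs_le.1 hs.2.2⟩
    have := hF' s h1 (s + η) h2 (by simpa [abs_of_pos hη] using hη1)
    rw [dist_eq_norm] at this
    exact this.le


lemma scaled {α r β : ℝ} (hα : α < 0) (hr : 0 < r) (hβ : β < α) {D : Set ℂ}
    (hD : D ⊆ {ζ : ℂ | ζ.re < β})
    (hacc : ∃ z : ℂ, z.re < β ∧ AccPt z (Filter.principal D)) {T T' : ℝ → ℂ}
    (hT : ∀ x, HasDerivAt T (T' x) x) (hT0 : ∀ x ≤ 0, T x = 0)
    (hT'0 : ∀ x ≤ 0, T' x = 0) (hc : Continuous T') (hlim : Tendsto T' atTop (𝓝 0))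
    {F : ℂ → ℂ} (hFan : DifferentiableOn ℂ F (Ropen α r)) (hFcont : ContinuousOn F (Rbar α r))
    (hFeq : ∀ s ∈ Rbar α r, 0 < s.re → F s = Laplace T s) : Approx α r D T' F := by
  apply Approx.of_close
  intro ε hε
  obtain ⟨M, R, hM0, hR0, hM, hR, -⟩ := growth hT hT0 hT'0 hc hlim (by positivity : 0 < ε / 4)
  have hu : UniformContinuous T' := by
    refine hc.uniformContinuous_of_tendsto_cocompact (x := 0) ?_
    rw [cocompact_eq_atBot_atTop, tendsto_sup]
    refine ⟨?_, hlim⟩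
    refine tendsto_const_nhds.congr' ?_
    filter_upwards [eventually_le_atBot 0] with x hx
    rw [hT'0 x hx]
  obtain ⟨δ₁, hδ₁, hT'u⟩ := Metric.uniformContinuous_iff.1 hu (ε / 4) (by positivity)
  have hFu := (isCompact_Rbar α r).uniformContinuousOn_of_continuous hFcont
  obtain ⟨δ₂, hδ₂, hF'⟩ := Metric.uniformContinuousOn_iff.1 hFu (ε / 2) (by positivity)
  obtain ⟨N₀, hN₀⟩ := (isCompact_Rbar α r).exists_bound_of_continuousOn hFcont
  obtain ⟨N, hN0, hN⟩ : ∃ N, 0 ≤ N ∧ ∀ s ∈ Rbar α r, ‖F s‖ ≤ N :=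
    ⟨max N₀ 0, le_max_right _ _, fun s hs => (hN₀ s hs).trans (le_max_left _ _)⟩
  set Q := |α| + 1 + r with hQ
  have hQ0 : 0 < Q := by positivity
  obtain ⟨θ, hθ, hθ1, hθ2, hθ3, hθ4⟩ : ∃ θ : ℝ, 0 < θ ∧ θ * R < δ₁ ∧ θ * M ≤ ε / 2 ∧ θ * Q < δ₂ ∧
      θ * N ≤ ε / 2 := by
    have t : ∀ c d : ℝ, 0 < d → ∀ᶠ θ in 𝓝[>] (0 : ℝ), θ * c < d := by
      intro c d hd
      have : Tendsto (fun θ : ℝ => θ * c) (𝓝 0) (𝓝 (0 * c)) := tendsto_id.mul_const c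
      rw [zero_mul] at this
      exact (this.mono_left nhdsWithin_le_nhds).eventually (gt_mem_nhds hd)
    have := ((((eventually_mem_nhdsWithin : ∀ᶠ θ in 𝓝[>] (0 : ℝ), θ ∈ Ioi (0 : ℝ)).and (t R δ₁ hδ₁)).and
      (t M (ε / 2) (by positivity))).and (t Q δ₂ hδ₂)).and (t N (ε / 2) (by positivity))
    obtain ⟨θ, ⟨⟨⟨h1, h2⟩, h3⟩, h4⟩, h5⟩ := this.exists
    exact ⟨θ, h1, h2, h3.le, h4, h5.le⟩
  set l := 1 + θ with hl
  have hl1 : 1 < l := by linarith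
  have hl0 : 0 < l := by linarith
  have hlc : (l : ℂ) ≠ 0 := by exact_mod_cast hl0.ne'
  have hsre : ∀ s : ℂ, (s / l).re = s.re / l := fun s => Complex.div_ofReal_re s l
  have hsim : ∀ s : ℂ, (s / l).im = s.im / l := fun s => Complex.div_ofReal_im s l
  refine ⟨fun x => l * T' (l * x), fun s => F (s / l) / l, ?_, ?_, ?_⟩
  · have hO : ∀ s ∈ WW (l * α) l (l * r), s / l ∈ Ropen α r := by
      intro s hs
      refine ⟨?_, ?_, ?_⟩
      · rw [hsre, lt_div_iff₀ hl0]; linarith [hs.1]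
      · rw [hsre, div_lt_one hl0]; exact hs.2.1
      · rw [hsim, abs_div, abs_of_pos hl0, div_lt_iff₀ hl0]; linarith [hs.2.2]
    refine core0 (a := l * α) (b := l) (ρ₀ := l * r) (T := fun x => T (l * x)) hα hr hβ hD hacc
      (by nlinarith) hl1 (by nlinarith) ?_ ?_ ?_ (by fun_prop) ?_ ?_ ?_
    · intro x
      have h1 : HasDerivAt (fun x : ℝ => l * x) l x := by
        simpa using (hasDerivAt_id x).const_mul l
      have := (hT (l * x)).scomp x h1
      rw [Complex.real_smul] at this
      exact this
    · intro x hx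
      exact hT0 _ (mul_nonpos_of_nonneg_of_nonpos hl0.le hx)
    · intro x hx
      rw [hT'0 _ (mul_nonpos_of_nonneg_of_nonpos hl0.le hx), mul_zero]
    · have : Tendsto (fun x => T' (l * x)) atTop (𝓝 0) :=
        hlim.comp (tendsto_id.const_mul_atTop hl0)
      simpa using this.const_mul (l : ℂ)
    · refine DifferentiableOn.div_const (hFan.comp (by fun_prop) hO) _
    · intro s hs hs0
      rw [hFeq _ (Ropen_subset_Rbar _ _ (hO s hs)) (by rw [hsre]; positivity)]
      unfold Laplace
      have := integral_comp_mul_left_Ioi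
        (fun x : ℝ => T x * Complex.exp (-(s / l * (x : ℂ)))) 0 hl0
      rw [mul_zero] at this
      rw [div_eq_inv_mul, ← Complex.ofReal_inv, ← Complex.real_smul, ← this]
      congr 1
      ext x
      congr 3
      push_cast
      field_simp
  · intro x hx
    have e : T' x - l * T' (l * x) = (T' x - T' (l * x)) - θ * T' (l * x) := by
      rw [hl]; push_cast; ring
    dsimp only
    rw [e]
    refine (norm_sub_le _ _).trans ?_
    have h1 : ‖(θ : ℂ) * T' (l * x)‖ ≤ ε / 2 := by
      rw [norm_mul, Complex.norm_real, Real.norm_of_nonneg hθ.le]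
      exact le_trans (by gcongr; exact hM _) hθ2
    have h2 : ‖T' x - T' (l * x)‖ ≤ ε / 4 + ε / 4 := by
      by_cases hxR : x ≤ R
      · have := hT'u (a := x) (b := l * x) (by
          rw [Real.dist_eq, show x - l * x = -(θ * x) by rw [hl]; ring, abs_neg,
            abs_of_nonneg (by positivity)]
          exact lt_of_le_of_lt (by gcongr) hθ1)
        rw [dist_eq_norm] at this
        linarith
      · have hxl : R ≤ l * x := by nlinarith
        exact (norm_sub_le _ _).trans (add_le_add (hR x (by linarith)) (hR _ hxl))
    linarith
  · intro s hs
    have hsl : s / l ∈ Rbar α r := by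
      refine ⟨?_, ?_, ?_⟩
      · rw [hsre, le_div_iff₀ hl0]; nlinarith [hs.1]
      · rw [hsre, div_le_one hl0]; linarith [hs.2.1]
      · rw [hsim, abs_div, abs_of_pos hl0, div_le_iff₀ hl0]; nlinarith [hs.2.2]
    have hsn : ‖s‖ ≤ Q := by
      have h1 := Complex.norm_le_abs_re_add_abs_im s
      have h2 : |s.re| ≤ |α| + 1 := by
        rw [abs_le]
        have := neg_abs_le α
        have := abs_nonneg α
        exact ⟨by linarith [hs.1], by linarith [hs.2.1]⟩
      rw [hQ]
      linarith [hs.2.2]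
    have e1 : s - s / l = (θ / l : ℝ) * s := by
      have : (θ : ℂ) = l - 1 := by rw [hl]; push_cast; ring
      push_cast; rw [this]; field_simp
    have e2 : F s - F (s / l) / l = (F s - F (s / l)) + (θ / l : ℝ) * F (s / l) := by
      have : (θ : ℂ) = l - 1 := by rw [hl]; push_cast; ring
      push_cast; rw [this]; field_simp; ring
    have hθl : θ / l ≤ θ := div_le_self hθ.le hl1.le
    have hθl0 : 0 ≤ θ / l := by positivity
    dsimp only
    rw [e2]
    refine (norm_add_le _ _).trans ?_
    have h1 : ‖((θ / l : ℝ) : ℂ) * F (s / l)‖ ≤ ε / 2 := by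
      rw [norm_mul, Complex.norm_real, Real.norm_of_nonneg hθl0]
      exact le_trans (by gcongr; exact hN _ hsl) hθ4
    have h2 := hF' s hs (s / l) hsl (by
      rw [dist_eq_norm, e1, norm_mul, Complex.norm_real, Real.norm_of_nonneg hθl0]
      exact lt_of_le_of_lt (by gcongr) hθ3)
    rw [dist_eq_norm] at h2
    linarith

theorem V0_in_closure_of_span_exponentials
    (α r β : ℝ) (hα : α < 0) (hr : 0 < r) (hβ : β < α)
    (D : Set ℂ) (hD : D ⊆ {ζ : ℂ | ζ.re < β})
    (hacc : ∃ z : ℂ, z.re < β ∧ AccPt z (Filter.principal D))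
    (τ τ' : ℝ → ℂ) (F : ℂ → ℂ)
    (hder : ∀ x ∈ Set.Ici (0 : ℝ), HasDerivWithinAt τ (τ' x) (Set.Ici 0) x)
    (hcont : ContinuousOn τ' (Set.Ici 0))
    (hto0 : Tendsto τ' atTop (nhds 0))
    (hτ0 : τ 0 = 0) (hτ'0 : τ' 0 = 0)
    (hFan : DifferentiableOn ℂ F (Ropen α r))
    (hFcont : ContinuousOn F (Rbar α r))
    (hFeq : ∀ s ∈ Rbar α r, 0 < s.re → F s = Laplace τ s)
    (ε : ℝ) (hε : 0 < ε) :
    ∃ (n : ℕ) (ζs : Fin n → ℂ) (c : Fin n → ℂ),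
      (∀ j : Fin n, ζs j ∈ D) ∧
      ∃ ε₁ ε₂ : ℝ, 0 ≤ ε₁ ∧ 0 ≤ ε₂ ∧ ε₁ + ε₂ < ε ∧
        (∀ x : ℝ, 0 ≤ x →
          ‖τ' x - ∑ j : Fin n, c j * ζs j * Complex.exp (ζs j * (x : ℂ))‖ ≤ ε₁) ∧
        (∀ s ∈ Rbar α r, ‖F s - ∑ j : Fin n, c j / (s - ζs j)‖ ≤ ε₂) := by
  set T : ℝ → ℂ := fun x => τ (max x 0) with hTd
  set T' : ℝ → ℂ := fun x => τ' (max x 0) with hT'd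
  have hT0 : ∀ x ≤ 0, T x = 0 := fun x hx => by rw [hTd]; simp [max_eq_right hx, hτ0]
  have hT'0 : ∀ x ≤ 0, T' x = 0 := fun x hx => by rw [hT'd]; simp [max_eq_right hx, hτ'0]
  have hTp : ∀ x, 0 ≤ x → T x = τ x := fun x hx => by rw [hTd]; simp [max_eq_left hx]
  have hT'p : ∀ x, 0 ≤ x → T' x = τ' x := fun x hx => by rw [hT'd]; simp [max_eq_left hx]
  have hTr : ∀ x, 0 ≤ x → HasDerivWithinAt T (T' x) (Set.Ici 0) x := by
    intro x hx
    rw [hT'p x hx]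
    exact (hder x hx).congr (fun y hy => hTp y hy) (hTp x hx)
  have hTl : ∀ x, x ≤ 0 → HasDerivWithinAt T (T' x) (Set.Iic 0) x := by
    intro x hx
    rw [hT'0 x hx]
    exact (hasDerivWithinAt_const x (Set.Iic 0) (0 : ℂ)).congr (fun y hy => hT0 y hy) (hT0 x hx)
  have hT : ∀ x, HasDerivAt T (T' x) x := by
    intro x
    rcases lt_trichotomy x 0 with hx | hx | hx
    · exact (hTl x hx.le).hasDerivAt (Iic_mem_nhds hx)
    · have := (hTl x hx.le).union (hTr x hx.ge)
      rw [Set.Iic_union_Ici] at this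
      exact this.hasDerivAt Filter.univ_mem
    · exact (hTr x hx.le).hasDerivAt (Ici_mem_nhds hx)
  have hTc : Continuous T' := hcont.comp_continuous (by fun_prop) (fun x => le_max_right x 0)
  have hlim : Tendsto T' atTop (nhds 0) := by
    refine hto0.congr' ?_
    filter_upwards [eventually_ge_atTop 0] with x hx
    exact (hT'p x hx).symm
  have hLap : ∀ s, Laplace T s = Laplace τ s := by
    intro s
    unfold Laplace
    refine setIntegral_congr_fun measurableSet_Ioi fun x hx => ?_
    rw [hTp x (le_of_lt hx)]
  have happ : Approx α r D T' F := scaled hα hr hβ hD hacc hT hT0 hT'0 hTc hlim hFan hFcont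
    (fun s hs hs0 => by rw [hLap]; exact hFeq s hs hs0)
  obtain ⟨n, ζs, c, h1, h2, h3⟩ := happ (ε / 3) (by positivity)
  refine ⟨n, ζs, c, h1, ε / 3, ε / 3, by positivity, by positivity, by linarith, ?_, h3⟩
  intro x hx
  rw [← hT'p x hx]
  exact h2 x hx
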